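/- For every p ≥ 0, θ(K_{1,1,4p+2,4p+2}) = θ(K_{1,1,4p+3,4p+3}) = p + 2. -/

import Mathlib

open SimpleGraph

/-- A simple graph is planar if it admits a drawing in the plane: an injective
placement of vertices and, for each edge, an injective continuous arc joining
the images of its endpoints, such that arcs avoid vertex images in their
interiors and distinct arcs meet only at vertex images. -/
def IsPlanar {V : Type*} (G : SimpleGraph V) : Prop :=
  ∃ (f : V → ℝ × ℝ) (γ : G.edgeSet → (Set.Icc (0:ℝ) 1 → ℝ × ℝ)),
    Function.Injective f ∧
    (∀ e : G.edgeSet, Continuous (γ e)) ∧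
    (∀ e : G.edgeSet, ∃ u v : V, (e : Sym2 V) = s(u, v) ∧
      γ e ⟨0, by norm_num⟩ = f u ∧ γ e ⟨1, by norm_num⟩ = f v) ∧
    (∀ e : G.edgeSet, Function.Injective (γ e)) ∧
    (∀ e : G.edgeSet, ∀ t : Set.Icc (0:ℝ) 1, (t : ℝ) ≠ 0 → (t : ℝ) ≠ 1 →
      ∀ v : V, γ e t ≠ f v) ∧
    (∀ e e' : G.edgeSet, e ≠ e' → ∀ s t : Set.Icc (0:ℝ) 1,
      γ e s = γ e' t → γ e s ∈ Set.range f)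

/-- The thickness of a graph: the least `n` such that `G` is the union of `n`
planar subgraphs. -/
noncomputable def thickness {V : Type*} (G : SimpleGraph V) : ℕ :=
  sInf {n : ℕ | ∃ H : Fin n → SimpleGraph V,
    (∀ i, H i ≤ G) ∧ (∀ i, IsPlanar (H i)) ∧ (⨆ i, H i) = G}

/-! For the lower bound, `K_{1,1,m,m}` contains `K_{m+1,m+1}`, which is triangle-free, so each
planar layer restricts to a triangle-free planar graph on `2m + 2` vertices, and such a graph has
at most `2(2m + 2) - 4 = 4m` edges; hence at least `(m + 1)² / (4m) > p + 1` layers are needed.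

Euler's bound is proved without the Jordan curve theorem. The thirds of the arcs of a drawing are
compact, so a fine brick wall separates them, and the drawing becomes a minor of the triangular
lattice. Every mod 2 cycle of the lattice is the boundary of a set of triangles. Merging the
triangles that are not separated by the minor gives faces such that the cycle space of the graph
consists of the coboundaries of sets of faces, every edge lying on at most two faces.

For the upper bound, the vertices of each row of `K_{m+1,m+1}` are split into `p + 1` blocks of
four. The layer of a block is a strip with the eight vertices of the block on its rim, in whose
cells each of the other vertices is joined to two rim vertices. These `p + 1` layers miss only the
edges inside the rows, the edges joining vertices of the same index, and one edge in each block. A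
last layer, a double fan around the two vertices of index `0`, covers them.
-/

section Chains

variable {P Q L M F : Type*}

/-- The mod 2 boundary of an edge: the formal sum of its two endpoints. -/
noncomputable def endpointSum : Sym2 P → P →₀ ZMod 2 :=
  Sym2.lift ⟨fun x y => .single x 1 + .single y 1, fun _ _ => add_comm _ _⟩

/-- The boundary map from 1-chains to 0-chains, over `ZMod 2`, of a graph given by a family
`ends` of edges. Its kernel is the cycle space. -/
noncomputable def boundary (ends : L → Sym2 P) : (L →₀ ZMod 2) →ₗ[ZMod 2] P →₀ ZMod 2 :=
  Finsupp.linearCombination (ZMod 2) (endpointSum ∘ ends)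

/-- The coboundary map of a family of edges, the edge `e` having the face `l e` on one side and
the face `r e` on the other. -/
def coboundary (l r : L → F) : (F → ZMod 2) →ₗ[ZMod 2] L → ZMod 2 where
  toFun g e := g (l e) + g (r e)
  map_add' _ _ := by ext; simp only [Pi.add_apply]; ring
  map_smul' _ _ := by ext; simp only [Pi.smul_apply, smul_add, RingHom.id_apply]

lemma endpointSum_mk (x y : P) : endpointSum s(x, y) = .single x 1 + .single y 1 := rfl

lemma coboundary_apply (l r : L → F) (g : F → ZMod 2) (e : L) :
    coboundary l r g e = g (l e) + g (r e) := rfl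

@[simp]
lemma boundary_single (ends : L → Sym2 P) (e : L) (a : ZMod 2) :
    boundary ends (.single e a) = a • endpointSum (ends e) :=
  Finsupp.linearCombination_single _ _ _

lemma mapDomain_endpointSum (f : P → Q) (e : Sym2 P) :
    (endpointSum e).mapDomain f = endpointSum (e.map f) := by
  induction e with
  | h x y =>
    simp only [endpointSum_mk, Sym2.map_mk, Finsupp.mapDomain_add, Finsupp.mapDomain_single]

lemma endpointSum_eq_zero_of_isDiag {e : Sym2 P} (he : e.IsDiag) : endpointSum e = 0 := by
  induction e with
  | h x y =>
    obtain rfl : x = y := he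
    rw [endpointSum_mk, ← Finsupp.single_add, CharTwo.add_self_eq_zero, Finsupp.single_zero]

lemma endpointSum_apply_ne_zero {e : Sym2 P} {x : P} (he : endpointSum e x ≠ 0) : x ∈ e := by
  classical
  induction e with
  | h a b =>
    by_contra hx
    rw [Sym2.mem_iff, not_or] at hx
    simp [endpointSum_mk, Ne.symm hx.1, Ne.symm hx.2] at he

lemma endpointSum_apply_of_mem {e : Sym2 P} {x : P} (he : ¬ e.IsDiag) (hx : x ∈ e) :
    endpointSum e x = 1 := by
  obtain ⟨y, rfl⟩ := hx
  have hxy : y ≠ x := fun h => he h.symm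
  simp [endpointSum_mk, hxy]

lemma mapDomain_boundary (f : P → Q) (ends : L → Sym2 P) (c : L →₀ ZMod 2) :
    (boundary ends c).mapDomain f = boundary (fun e => (ends e).map f) c := by
  induction c using Finsupp.induction_linear with
  | zero => simp
  | add c₁ c₂ h₁ h₂ => simp only [map_add, Finsupp.mapDomain_add, h₁, h₂]
  | single e a => simp only [boundary_single, Finsupp.mapDomain_smul, mapDomain_endpointSum]

lemma boundary_mapDomain (f : M → L) (ends : L → Sym2 P) (c : M →₀ ZMod 2) :
    boundary ends (c.mapDomain f) = boundary (ends ∘ f) c := by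
  simp only [boundary, Finsupp.linearCombination_mapDomain, Function.comp_assoc]

lemma boundary_eq_zero_of_isDiag {ends : L → Sym2 P} {c : L →₀ ZMod 2}
    (hc : ∀ e ∈ c.support, (ends e).IsDiag) : boundary ends c = 0 :=
  Finset.sum_eq_zero fun e he => by
    change c e • endpointSum (ends e) = 0
    rw [endpointSum_eq_zero_of_isDiag (hc e he), smul_zero]

lemma exists_mem_ends_of_mem_support_boundary {ends : L → Sym2 P} {c : L →₀ ZMod 2} {x : P}
    (hx : x ∈ (boundary ends c).support) : ∃ e, x ∈ ends e := by
  rw [Finsupp.mem_support_iff, boundary, Finsupp.linearCombination_apply, Finsupp.sum,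
    Finsupp.finsetSum_apply] at hx
  obtain ⟨e, -, he⟩ := Finset.exists_ne_zero_of_sum_ne_zero hx
  exact ⟨e, endpointSum_apply_ne_zero (right_ne_zero_of_mul he)⟩

lemma exists_ne_mem_support_of_boundary_eq_zero {ends : L → Sym2 P} {c : L →₀ ZMod 2}
    (hc : boundary ends c = 0) {e : L} (he : e ∈ c.support) (hdiag : ¬ (ends e).IsDiag) {x : P}
    (hx : x ∈ ends e) : ∃ e' ∈ c.support, e' ≠ e ∧ x ∈ ends e' := by
  by_contra! h
  have hsum : ∑ e' ∈ c.support, c e' * endpointSum (ends e') x = 0 := by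
    have := DFunLike.congr_fun hc x
    rwa [boundary, Finsupp.linearCombination_apply, Finsupp.sum, Finsupp.finsetSum_apply] at this
  rw [Finset.sum_eq_single_of_mem e he fun e' he' hne => ?_, endpointSum_apply_of_mem hdiag hx,
    mul_one] at hsum
  · exact Finsupp.mem_support_iff.1 he hsum
  · by_contra hne'
    exact h e' he' hne (endpointSum_apply_ne_zero (right_ne_zero_of_mul hne'))

lemma card_add_one_le_finrank_ker_boundary_add_card [Fintype L] [Fintype P] [Nonempty P]
    (ends : L → Sym2 P) :
    Fintype.card L + 1 ≤ Module.finrank (ZMod 2) (boundary ends).ker + Fintype.card P := by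
  let augmentation : (P →₀ ZMod 2) →ₗ[ZMod 2] ZMod 2 := Finsupp.linearCombination _ fun _ => 1
  have range_le : (boundary ends).range ≤ augmentation.ker := by
    rw [LinearMap.range_le_ker_iff]
    refine Finsupp.lhom_ext fun e a => ?_
    induction h : ends e with
    | h x y => simp [augmentation, h, endpointSum_mk, CharTwo.add_self_eq_zero]
  have surjective : Function.Surjective augmentation := fun a =>
    ⟨.single (Classical.arbitrary P) a, by simp [augmentation]⟩
  have h₁ := augmentation.finrank_range_add_finrank_ker
  have h₂ := (boundary ends).finrank_range_add_finrank_ker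
  have h₃ := Submodule.finrank_mono range_le
  rw [LinearMap.range_eq_top.2 surjective, finrank_top, Module.finrank_self,
    Module.finrank_finsupp_self] at h₁
  rw [Module.finrank_finsupp_self] at h₂
  omega

end Chains

section Faces

variable {E F : Type*}

lemma coboundary_piSingle_apply [DecidableEq F] (l r : E → F) (A : F) (e : E) :
    coboundary l r (Pi.single A 1) e =
      (if l e = A then 1 else 0) + if r e = A then 1 else 0 := by
  simp only [coboundary_apply, Pi.single_apply]

lemma coboundary_eq_sum [DecidableEq F] (l r : E → F) {S : Finset F}
    (hS : ∀ A ∉ S, coboundary l r (Pi.single A 1) = 0) (g : F → ZMod 2) :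
    coboundary l r g = ∑ A ∈ S, g A • coboundary l r (Pi.single A 1) := by
  ext e
  rw [Finset.sum_apply, Finset.sum_subset (Finset.subset_union_left (s₂ := {l e, r e}))
    fun A _ hA => by rw [hS A hA, smul_zero, Pi.zero_apply]]
  simp only [Pi.smul_apply, smul_eq_mul, coboundary_apply, Pi.single_apply, mul_add,
    Finset.sum_add_distrib, mul_ite, mul_one, mul_zero, Finset.sum_ite_eq]
  rw [if_pos (by simp), if_pos (by simp)]

lemma finrank_range_coboundary_add_one_le [DecidableEq F] (l r : E → F) {S : Finset F}
    (hS : ∀ A ∉ S, coboundary l r (Pi.single A 1) = 0) (hne : S.Nonempty) :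
    Module.finrank (ZMod 2) (coboundary l r).range + 1 ≤ S.card := by
  classical
  obtain ⟨A₀, hA₀⟩ := hne
  let w (A : F) := coboundary l r (Pi.single A 1)
  -- Adding a constant to `g` does not change its coboundary, so `g` may be taken to vanish at `A₀`.
  have range_le : (coboundary l r).range ≤ Submodule.span (ZMod 2) ((S.erase A₀).image w) := by
    rintro _ ⟨g, rfl⟩
    have normalize : coboundary l r g = coboundary l r fun A => g A + g A₀ := by
      ext e
      simp only [coboundary_apply]
      linear_combination -(CharTwo.add_self_eq_zero (g A₀))
    rw [normalize, coboundary_eq_sum l r hS, ← Finset.add_sum_erase _ _ hA₀,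
      CharTwo.add_self_eq_zero, zero_smul, zero_add]
    exact Submodule.sum_smul_mem _ _ fun A hA =>
      Submodule.subset_span (Finset.mem_coe.2 (Finset.mem_image_of_mem w hA))
  have h := (Submodule.finrank_mono range_le).trans
    ((finrank_span_finset_le_card _).trans Finset.card_image_le)
  have := Finset.card_pos.2 ⟨A₀, hA₀⟩
  rw [Finset.card_erase_of_mem hA₀] at h
  omega

lemma mul_finrank_range_coboundary_add_one_le [Fintype E] (l r : E → F) {k : ℕ}
    (hk : ∀ c ∈ (coboundary l r).range, c ≠ 0 → k ≤ {e | c e ≠ 0}.ncard)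
    (hne : (coboundary l r).range ≠ ⊥) :
    k * (Module.finrank (ZMod 2) (coboundary l r).range + 1) ≤ 2 * Fintype.card E := by
  classical
  let w (A : F) := coboundary l r (Pi.single A 1)
  let S : Finset F := {A ∈ Finset.univ.image l ∪ Finset.univ.image r | w A ≠ 0}
  have w_eq_zero (A : F) (hA : A ∉ S) : w A = 0 := by
    by_contra h
    refine hA (Finset.mem_filter.2 ⟨?_, h⟩)
    obtain ⟨e, he⟩ := Function.ne_iff.1 h
    by_contra hA
    simp only [Finset.mem_union, Finset.mem_image, Finset.mem_univ, true_and, not_or,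
      not_exists] at hA
    exact he (by simp [w, coboundary_piSingle_apply, hA.1 e, hA.2 e])
  have hS : S.Nonempty := by
    by_contra hS
    refine hne (LinearMap.range_eq_bot.2 (LinearMap.ext fun g => ?_))
    rw [coboundary_eq_sum l r w_eq_zero, Finset.not_nonempty_iff_eq_empty.1 hS, Finset.sum_empty,
      LinearMap.zero_apply]
  calc k * (Module.finrank (ZMod 2) (coboundary l r).range + 1) ≤ S.card * k := by
        rw [mul_comm]
        gcongr
        exact finrank_range_coboundary_add_one_le l r w_eq_zero hS
    _ ≤ (Finset.univ : Finset E).card * 2 := by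
        refine Finset.card_mul_le_card_mul (fun A e => w A e ≠ 0) (fun A hA => ?_) fun e _ => ?_
        · have h := hk _ ⟨_, rfl⟩ (Finset.mem_filter.1 hA).2
          rwa [Set.ncard_eq_toFinset_card', Set.toFinset_ofPred] at h
        · refine (Finset.card_le_card (t := {l e, r e}) fun A hA => ?_).trans Finset.card_le_two
          have hA : w A e ≠ 0 := (Finset.mem_filter.1 hA).2
          contrapose! hA
          simp only [Finset.mem_insert, Finset.mem_singleton, not_or] at hA
          simp [w, coboundary_piSingle_apply, Ne.symm hA.1, Ne.symm hA.2]
    _ = 2 * Fintype.card E := mul_comm _ _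

end Faces

section Lattice

/-- The edges of the triangular lattice on `ℤ × ℤ`: the unit square with lower left corner
`(i, j)` has the bottom side `h i j`, the left side `v i j` and the diagonal `d i j`. -/
inductive LatticeEdge : Type
  | h (i j : ℤ)
  | v (i j : ℤ)
  | d (i j : ℤ)

namespace LatticeEdge

/-- The two lattice points joined by an edge. -/
def ends : LatticeEdge → Sym2 (ℤ × ℤ)
  | h i j => s((i, j), (i + 1, j))
  | v i j => s((i, j), (i, j + 1))
  | d i j => s((i + 1, j), (i, j + 1))

/-- One of the two triangles at an edge; `(true, i, j)` and `(false, i, j)` are the lower left and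
the upper right half of the unit square with lower left corner `(i, j)`. -/
def left : LatticeEdge → Bool × ℤ × ℤ
  | h i j | v i j | d i j => (true, i, j)

/-- The other triangle at an edge, in the encoding of `LatticeEdge.left`. -/
def right : LatticeEdge → Bool × ℤ × ℤ
  | h i j => (false, i, j - 1)
  | v i j => (false, i - 1, j)
  | d i j => (false, i, j)

lemma not_isDiag_ends (e : LatticeEdge) : ¬ e.ends.IsDiag := by
  cases e <;> simp [ends]

lemma boundary_ends_apply (z : LatticeEdge →₀ ZMod 2) (i j : ℤ) :
    boundary ends z (i, j) = z (h i j) + z (h (i - 1) j) + z (v i j) + z (v i (j - 1)) +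
      z (d (i - 1) j) + z (d i (j - 1)) := by
  classical
  induction z using Finsupp.induction_linear with
  | zero => simp
  | add z₁ z₂ h₁ h₂ =>
    rw [map_add, Finsupp.add_apply, h₁, h₂]
    simp only [Finsupp.add_apply]
    ring
  | single e a =>
    cases e <;>
    · simp only [boundary_single, ends, endpointSum_mk, Finsupp.smul_apply, Finsupp.add_apply,
        Finsupp.single_apply, Prod.mk.injEq, reduceCtorEq, h.injEq, v.injEq, d.injEq, smul_eq_mul,
        mul_add, mul_ite, mul_one, mul_zero, if_false, add_zero, zero_add, eq_sub_iff_add_eq]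

end LatticeEdge

open LatticeEdge

lemma boundary_eq_zero_of_eq_coboundary {z : LatticeEdge →₀ ZMod 2} {g : Bool × ℤ × ℤ → ZMod 2}
    (hz : ⇑z = coboundary left right g) : boundary ends z = 0 := by
  ext ⟨i, j⟩
  simp only [boundary_ends_apply, hz, coboundary_apply, left, right, Finsupp.zero_apply]
  linear_combination CharTwo.add_self_eq_zero (g (true, i, j) + g (false, i, j - 1) +
    g (true, i - 1, j) + g (false, i - 1, j - 1) + g (false, i - 1, j) + g (true, i, j - 1))

open Filter in
lemma exists_primitive {M : Type*} [AddCommMonoid M] {f : ℤ → M} (hf : ∀ᶠ i in atBot, f i = 0) :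
    ∃ D : ℤ → M, (∀ i, D i = D (i - 1) + f i) ∧ ∀ᶠ i in atBot, D i = 0 := by
  obtain ⟨a, ha⟩ := eventually_atBot.1 hf
  refine ⟨fun i => ∑ k ∈ Finset.Icc a i, f k, fun i => ?_, ?_⟩
  · rcases le_or_gt a i with hi | hi
    · beta_reduce
      rw [← Finset.insert_Icc_sub_one_right_eq_Icc hi, Finset.sum_insert (by simp), add_comm]
    · simp only [Finset.Icc_eq_empty_of_lt hi, Finset.Icc_eq_empty_of_lt (by omega : i - 1 < a),
        ha i hi.le, Finset.sum_empty, add_zero]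
  · filter_upwards [eventually_lt_atBot a] with i hi
    rw [Finset.Icc_eq_empty_of_lt hi, Finset.sum_empty]

open Filter in
lemma eq_of_sub_one_eq_of_eventually_eq {M : Type*} {f : ℤ → M} {a : M}
    (hf : ∀ i, f (i - 1) = f i) (ha : ∀ᶠ i in atBot, f i = a) (i : ℤ) : f i = a := by
  obtain ⟨b, hb⟩ := eventually_atBot.1 ha
  rcases le_total i b with hi | hi
  · exact hb i hi
  · induction i, hi using Int.leInduction with
    | base => exact hb b le_rfl
    | succ i _ ih => rw [← hf, add_sub_cancel_right, ih]

open Filter in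
/-- The plane has no first homology: every finitely supported cycle bounds triangles. -/
lemma exists_eq_coboundary_of_boundary_eq_zero {z : LatticeEdge →₀ ZMod 2}
    (hz : boundary ends z = 0) : ∃ g, ⇑z = coboundary left right g := by
  have eventually_zero {f : ℤ → LatticeEdge} (hf : f.Injective) : ∀ᶠ i in atBot, z (f i) = 0 :=
    (hf.tendsto_cofinite.eventually (eventually_cofinite.2 z.hasFiniteSupport)).filter_mono
      (Int.cofinite_eq ▸ le_sup_left)
  have hd (j : ℤ) : ∀ᶠ i in atBot, z (d i j) = 0 := eventually_zero fun _ _ h => by simpa using h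
  have hv (j : ℤ) : ∀ᶠ i in atBot, z (v i j) = 0 := eventually_zero fun _ _ h => by simpa using h
  have hh (j : ℤ) : ∀ᶠ i in atBot, z (h i j) = 0 := eventually_zero fun _ _ h => by simpa using h
  have (j : ℤ) : ∀ᶠ i in atBot, z (v i j) + z (d i j) = 0 := by
    filter_upwards [hv j, hd j] with i h₁ h₂
    rw [h₁, h₂, add_zero]
  -- `D i j` is the sum of `z` along the edges crossed by a ray from the left in row `j`.
  choose D D_step D_zero using fun j => exists_primitive (this j)
  have row (i j : ℤ) : z (h i j) + (D j i + z (d i j)) + D (j - 1) i = 0 := by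
    refine eq_of_sub_one_eq_of_eventually_eq
      (f := fun i => z (h i j) + (D j i + z (d i j)) + D (j - 1) i) (fun i => ?_) ?_ i
    · have hz := DFunLike.congr_fun hz (i, j)
      rw [boundary_ends_apply, Finsupp.zero_apply] at hz
      rw [D_step j i, D_step (j - 1) i]
      linear_combination hz - CharTwo.add_self_eq_zero
        (z (d i j) + z (h i j) + z (v i j) + z (v i (j - 1)) + z (d i (j - 1)))
    · filter_upwards [hh j, hd j, D_zero j, D_zero (j - 1)] with i h₁ h₂ h₃ h₄
      rw [h₁, h₂, h₃, h₄]
      rfl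
  refine ⟨fun t => match t with
    | (true, i, j) => D j i + z (d i j)
    | (false, i, j) => D j i, funext fun e => ?_⟩
  cases e with
  | h i j =>
    change _ = D j i + z (d i j) + D (j - 1) i
    linear_combination row i j - CharTwo.add_self_eq_zero (D j i + z (d i j) + D (j - 1) i)
  | v i j =>
    change _ = D j i + z (d i j) + D j (i - 1)
    linear_combination -D_step j i - CharTwo.add_self_eq_zero (D j (i - 1) + z (d i j))
  | d i j =>
    change _ = D j i + z (d i j) + D j i
    linear_combination -CharTwo.add_self_eq_zero (D j i)

end Lattice

section EulerBound

variable {V : Type*} {G : SimpleGraph V}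

/-- The cycle space over `ZMod 2` of a graph. -/
noncomputable def cycleSpace (G : SimpleGraph V) : Submodule (ZMod 2) (G.edgeSet →₀ ZMod 2) :=
  (boundary fun e : G.edgeSet => (e : Sym2 V)).ker

lemma four_le_card_support_of_mem_cycleSpace (hG : G.CliqueFree 3) {c : G.edgeSet →₀ ZMod 2}
    (hc : c ∈ cycleSpace G) (hc₀ : c ≠ 0) : 4 ≤ c.support.card := by
  classical
  have next {e : G.edgeSet} (he : e ∈ c.support) {x y : V} (h : (e : Sym2 V) = s(x, y)) :
      ∃ e' ∈ c.support, ∃ z ≠ y, (e' : Sym2 V) = s(x, z) := by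
    obtain ⟨e', he', hne, z, hz⟩ := exists_ne_mem_support_of_boundary_eq_zero hc he
      (G.not_isDiag_of_mem_edgeSet e.2) (h ▸ Sym2.mem_mk_left x y)
    exact ⟨e', he', z, fun hzy => hne (Subtype.ext (by rw [hz, h, hzy])), hz⟩
  have adj {e : G.edgeSet} {x y : V} (h : (e : Sym2 V) = s(x, y)) : G.Adj x y := by
    rw [← mem_edgeSet, ← h]
    exact e.2
  obtain ⟨e, he⟩ := Finsupp.support_nonempty_iff.2 hc₀
  obtain ⟨a, b, hab⟩ : ∃ a b, (e : Sym2 V) = s(a, b) := Sym2.exists.1 ⟨_, rfl⟩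
  obtain ⟨e₁, he₁, x, hxb, hax⟩ := next he hab
  obtain ⟨e₂, he₂, y, hya, hby⟩ := next he (hab.trans Sym2.eq_swap)
  obtain ⟨e₃, he₃, z, hza, hxz⟩ := next he₁ (hax.trans Sym2.eq_swap)
  have hab' := (adj hab).ne
  have hax' := (adj hax).ne
  have hxy : x ≠ y := by
    rintro rfl
    exact hG _ (is3Clique_triple_iff.2 ⟨adj hab, adj hax, adj hby⟩)
  have hnodup : [e, e₁, e₂, e₃].Nodup := by
    simp only [List.nodup_cons, List.mem_cons, List.not_mem_nil, Subtype.ext_iff, hab, hax, hby,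
      hxz, Sym2.eq_iff, or_false, not_false_iff, List.nodup_nil, and_true]
    grind
  refine (List.toFinset_card_of_nodup hnodup).symm.le.trans (Finset.card_le_card ?_)
  simp only [List.toFinset_cons, List.toFinset_nil, Finset.insert_subset_iff, insert_empty_eq,
    Finset.singleton_subset_iff]
  exact ⟨he, he₁, he₂, he₃⟩

/-- Mac Lane's criterion: to every edge of `G` one can assign the two faces on its sides so that
the cycle space of `G` consists of the coboundaries of functions on faces. -/
def HasDual (G : SimpleGraph V) : Prop :=
  ∃ (F : Type) (l r : G.edgeSet → F), ∀ c : G.edgeSet →₀ ZMod 2,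
    c ∈ cycleSpace G ↔ ⇑c ∈ (coboundary l r).range

lemma HasDual.card_edgeSet_add_four_le [Finite V] (h : HasDual G) (hG : G.CliqueFree 3)
    (hV : 3 ≤ Nat.card V) : Nat.card G.edgeSet + 4 ≤ 2 * Nat.card V := by
  classical
  obtain ⟨F, l, r, h⟩ := h
  have : Fintype V := Fintype.ofFinite V
  have : Fintype G.edgeSet := Fintype.ofFinite _
  have : Nonempty V := (Nat.card_pos_iff.1 (by omega)).1
  rw [Nat.card_eq_fintype_card] at hV ⊢
  rw [Nat.card_eq_fintype_card]
  have hrank : Fintype.card G.edgeSet + 1 ≤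
      Module.finrank (ZMod 2) (cycleSpace G) + Fintype.card V :=
    card_add_one_le_finrank_ker_boundary_add_card _
  let ε := Finsupp.linearEquivFunOnFinite (ZMod 2) (ZMod 2) G.edgeSet
  have hrange : (coboundary l r).range = (cycleSpace G).map ε.toLinearMap := by
    ext c
    rw [Submodule.mem_map_equiv, h]
    rfl
  have hfinrank := hrange ▸ LinearEquiv.finrank_map_eq ε (cycleSpace G)
  rcases eq_or_ne (coboundary l r).range ⊥ with hbot | hbot
  · rw [hbot, finrank_bot] at hfinrank
    omega
  · have hle := mul_finrank_range_coboundary_add_one_le l r (k := 4) (fun c hc hc₀ => ?_) hbot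
    · omega
    · have h4 := four_le_card_support_of_mem_cycleSpace hG (c := ε.symm c)
        ((h _).2 hc) (by simpa using hc₀)
      rwa [← Set.ncard_coe_finset, ← Finsupp.fun_support_eq] at h4

end EulerBound

section LatticeModel

open LatticeEdge

variable {V : Type*} {G : SimpleGraph V}

/-- The triangular lattice as a simple graph. -/
def latticeGraph : SimpleGraph (ℤ × ℤ) := .fromEdgeSet (Set.range LatticeEdge.ends)

lemma latticeGraph_adj_iff {x y : ℤ × ℤ} :
    latticeGraph.Adj x y ↔ ∃ l : LatticeEdge, l.ends = s(x, y) := by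
  rw [latticeGraph, fromEdgeSet_adj, Set.mem_range, and_iff_left_of_imp]
  rintro ⟨l, hl⟩ rfl
  exact l.not_isDiag_ends (hl ▸ rfl)

lemma LatticeEdge.ends_injective : Function.Injective ends := by
  intro l l' h
  cases l <;> cases l' <;> simp only [ends, Sym2.eq_iff, Prod.mk.injEq] at h <;> grind

/-- A realization of `G` as a minor of the triangular lattice: disjoint finite connected branch
sets of lattice points, and for each edge of `G` a lattice edge between its branch sets. The branch
sets are encoded by labelling lattice points with the vertex they belong to, if any. -/
structure LatticeModel (G : SimpleGraph V) where
  label : ℤ × ℤ → Option V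
  finite_branch (v : V) : {x | label x = some v}.Finite
  connected_branch (v : V) : (latticeGraph.induce {x | label x = some v}).Connected
  edge : G.edgeSet → LatticeEdge
  map_label_edge (e : G.edgeSet) : (edge e).ends.map label = (e : Sym2 V).map some

namespace LatticeModel

variable (M : LatticeModel G)

/-- The lattice edges inside branch sets. -/
def branchEdges : Set LatticeEdge := {l | ∃ v, l.ends.map M.label = s(some v, some v)}

lemma edge_injective : Function.Injective M.edge := fun e e' h =>
  Subtype.ext (Sym2.map.injective (Option.some_injective V)
    (by rw [← M.map_label_edge, h, M.map_label_edge]))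

lemma edge_notMem_branchEdges (e : G.edgeSet) : M.edge e ∉ M.branchEdges := by
  rintro ⟨v, hv⟩
  rw [map_label_edge, ← Sym2.map_mk] at hv
  exact G.not_isDiag_of_mem_edgeSet e.2 (Sym2.map.injective (Option.some_injective V) hv ▸ rfl)

lemma finite_branchEdges_union_range [Finite V] : (M.branchEdges ∪ Set.range M.edge).Finite := by
  have := Fintype.ofFinite G.edgeSet
  refine .union ?_ (Set.finite_range _)
  have hfin : (⋃ v, {x | M.label x = some v}).Finite := Set.finite_iUnion M.finite_branch
  refine (hfin.toFinset.sym2.finite_toSet.preimage LatticeEdge.ends_injective.injOn).subset ?_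
  rintro l ⟨v, hv⟩
  simp only [Set.mem_preimage, Finset.mem_coe, Finset.mem_sym2_iff, Set.Finite.mem_toFinset,
    Set.mem_iUnion, Set.mem_ofPred_eq]
  intro x hx
  have : M.label x ∈ s(some v, some v) := hv ▸ Sym2.mem_map.2 ⟨x, hx, rfl⟩
  exact ⟨v, by simpa using this⟩

/-- The boundaries of the 1-chains inside branch sets. -/
noncomputable def branchBoundaries : Submodule (ZMod 2) (ℤ × ℤ →₀ ZMod 2) :=
  (Finsupp.supported (ZMod 2) (ZMod 2) M.branchEdges).map (boundary ends)

lemma single_sub_single_mem_branchBoundaries {x y : ℤ × ℤ} {v : V} (hx : M.label x = some v)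
    (hy : M.label y = some v) : .single x 1 - .single y 1 ∈ M.branchBoundaries := by
  obtain ⟨w⟩ := (M.connected_branch v).preconnected ⟨x, hx⟩ ⟨y, hy⟩
  suffices ∀ {a b : {x | M.label x = some v}}, (latticeGraph.induce _).Walk a b →
      Finsupp.single a.1 1 - .single b.1 1 ∈ M.branchBoundaries from this w
  intro a b w
  induction w with
  | nil => rw [sub_self]; exact zero_mem _
  | @cons a b c hab _ ih =>
    obtain ⟨l, hl⟩ : ∃ l : LatticeEdge, l.ends = s(a.1, b.1) := latticeGraph_adj_iff.1 hab
    have hmem : Finsupp.single a.1 1 - .single b.1 1 ∈ M.branchBoundaries := by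
      refine ⟨.single l 1, Finsupp.single_mem_supported _ _ ⟨v, ?_⟩, ?_⟩
      · rw [hl, Sym2.map_mk, a.2, b.2]
      · rw [boundary_single, one_smul, hl, endpointSum_mk, ZModModule.sub_eq_add]
    rw [← sub_add_sub_cancel _ (Finsupp.single b.1 1)]
    exact add_mem hmem ih

lemma mem_branchBoundaries_of_mapDomain_label_eq_zero {b : ℤ × ℤ →₀ ZMod 2}
    (hb : ∀ x ∈ b.support, ∃ v, M.label x = some v) (hlabel : b.mapDomain M.label = 0) :
    b ∈ M.branchBoundaries := by
  have (v : V) : ∃ x, M.label x = some v := nonempty_subtype.1 (M.connected_branch v).nonempty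
  choose root hroot using this
  let ρ (o : Option V) : ℤ × ℤ := o.elim 0 root
  have hsub : b - b.mapDomain (ρ ∘ M.label) ∈ M.branchBoundaries := by
    have hsum : b - b.mapDomain (ρ ∘ M.label) =
        ∑ x ∈ b.support, b x • (.single x 1 - .single (ρ (M.label x)) 1) := by
      simp only [smul_sub, Finset.sum_sub_distrib, Finsupp.smul_single_one]
      exact congrArg (· - b.mapDomain (ρ ∘ M.label)) b.sum_single.symm
    rw [hsum]
    refine Submodule.sum_smul_mem _ _ fun x hx => ?_
    obtain ⟨v, hv⟩ := hb x hx
    rw [hv]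
    exact M.single_sub_single_mem_branchBoundaries hv (hroot v)
  rwa [Finsupp.mapDomain_comp, hlabel, Finsupp.mapDomain_zero, sub_zero] at hsub

/-- The lattice chain `z` restricts to the chain `c` of `G`, up to lattice edges inside branch
sets. -/
def IsLift (z : LatticeEdge →₀ ZMod 2) (c : G.edgeSet →₀ ZMod 2) : Prop :=
  z - c.mapDomain M.edge ∈ Finsupp.supported (ZMod 2) (ZMod 2) M.branchEdges

variable {M} {z : LatticeEdge →₀ ZMod 2} {c : G.edgeSet →₀ ZMod 2}

lemma isLift_iff : M.IsLift z c ↔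
    (∀ e, z (M.edge e) = c e) ∧ ∀ l ∉ M.branchEdges ∪ Set.range M.edge, z l = 0 := by
  simp only [IsLift, Finsupp.mem_supported', Finsupp.sub_apply, sub_eq_zero, Set.mem_union, not_or]
  refine ⟨fun h => ⟨fun e => ?_, fun l hl => ?_⟩, fun ⟨h₁, h₂⟩ l hl => ?_⟩
  · rw [h _ (M.edge_notMem_branchEdges e), Finsupp.mapDomain_apply M.edge_injective]
  · rw [h l hl.1, Finsupp.mapDomain_of_notMem_range _ _ hl.2]
  · by_cases hl' : l ∈ Set.range M.edge
    · obtain ⟨e, rfl⟩ := hl'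
      rw [h₁, Finsupp.mapDomain_apply M.edge_injective]
    · rw [h₂ l ⟨hl, hl'⟩, Finsupp.mapDomain_of_notMem_range _ _ hl']

lemma IsLift.mapDomain_label_boundary (hz : M.IsLift z c) :
    (boundary ends z).mapDomain M.label =
      (boundary (fun e : G.edgeSet => (e : Sym2 V)) c).mapDomain some := by
  have hzero : boundary (fun l => (ends l).map M.label) (z - c.mapDomain M.edge) = 0 := by
    refine boundary_eq_zero_of_isDiag fun l hl => ?_
    obtain ⟨v, hv⟩ := hz hl
    exact hv ▸ rfl
  rw [map_sub, sub_eq_zero, boundary_mapDomain] at hzero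
  rw [mapDomain_boundary, mapDomain_boundary, hzero]
  congr 2
  exact funext M.map_label_edge

lemma IsLift.mem_cycleSpace (hz : M.IsLift z c) (hz₀ : boundary ends z = 0) : c ∈ cycleSpace G :=
  Finsupp.mapDomain_injective (Option.some_injective V)
    (by rw [← hz.mapDomain_label_boundary, hz₀, Finsupp.mapDomain_zero, Finsupp.mapDomain_zero])

lemma exists_isLift_of_mem_cycleSpace (M : LatticeModel G) (hc : c ∈ cycleSpace G) :
    ∃ z, M.IsLift z c ∧ boundary ends z = 0 := by
  have hlift : M.IsLift (c.mapDomain M.edge) c := by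
    rw [IsLift, sub_self]
    exact zero_mem _
  have hmem : boundary ends (c.mapDomain M.edge) ∈ M.branchBoundaries := by
    refine M.mem_branchBoundaries_of_mapDomain_label_eq_zero (fun x hx => ?_) ?_
    · rw [boundary_mapDomain] at hx
      obtain ⟨e, he⟩ := exists_mem_ends_of_mem_support_boundary hx
      have : M.label x ∈ (e : Sym2 V).map some :=
        M.map_label_edge e ▸ Sym2.mem_map.2 ⟨x, he, rfl⟩
      obtain ⟨v, -, hv⟩ := Sym2.mem_map.1 this
      exact ⟨v, hv.symm⟩
    · rw [hlift.mapDomain_label_boundary, LinearMap.mem_ker.1 hc, Finsupp.mapDomain_zero]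
  obtain ⟨z, hz, hzc⟩ := hmem
  refine ⟨c.mapDomain M.edge - z, ?_, by rw [map_sub, hzc, sub_self]⟩
  rw [IsLift, sub_sub_cancel_left]
  exact neg_mem hz

/-- Two triangles on the sides of a lattice edge that is not used by the model. The classes of
triangles generated by this relation are the faces of the model. -/
def Merged (M : LatticeModel G) (s t : Bool × ℤ × ℤ) : Prop :=
  ∃ l ∉ M.branchEdges ∪ Set.range M.edge, left l = s ∧ right l = t

theorem hasDual [Finite V] (M : LatticeModel G) : HasDual G := by
  refine ⟨Quot M.Merged, fun e => .mk _ (left (M.edge e)), fun e => .mk _ (right (M.edge e)),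
    fun c => ⟨fun hc => ?_, ?_⟩⟩
  · obtain ⟨z, hzc, hz⟩ := M.exists_isLift_of_mem_cycleSpace hc
    obtain ⟨g, hg⟩ := exists_eq_coboundary_of_boundary_eq_zero hz
    have hzc := isLift_iff.1 hzc
    have hmerged (s t : Bool × ℤ × ℤ) (h : M.Merged s t) : g s = g t := by
      obtain ⟨l, hl, rfl, rfl⟩ := h
      rw [← CharTwo.add_eq_zero, ← coboundary_apply, ← hg, hzc.2 l hl]
    exact ⟨Quot.lift g hmerged, funext fun e => (congrFun hg (M.edge e)).symm.trans (hzc.1 e)⟩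
  · rintro ⟨g, hg⟩
    let z := coboundary left right (g ∘ Quot.mk M.Merged)
    have z_eq_zero (l : LatticeEdge) (hl : l ∉ M.branchEdges ∪ Set.range M.edge) : z l = 0 := by
      rw [show z l = _ from coboundary_apply .., Function.comp_apply, Quot.sound ⟨l, hl, rfl, rfl⟩]
      exact CharTwo.add_self_eq_zero _
    let z' := Finsupp.ofSupportFinite z (M.finite_branchEdges_union_range.subset
      fun l hl => by_contra fun hl' => hl (z_eq_zero l hl'))
    exact IsLift.mem_cycleSpace (z := z') (isLift_iff.2 ⟨fun e => congrFun hg e, z_eq_zero⟩)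
      (boundary_eq_zero_of_eq_coboundary rfl)

end LatticeModel

end LatticeModel

section Drawing

open unitInterval

variable {V W : Type*} {G : SimpleGraph V} {H : SimpleGraph W}

/-- The data of a drawing of `G` in the plane, as in `IsPlanar`. -/
structure Drawing (G : SimpleGraph V) where
  point : V → ℝ × ℝ
  arc : G.edgeSet → I → ℝ × ℝ
  point_injective : Function.Injective point
  continuous_arc (e : G.edgeSet) : Continuous (arc e)
  arc_ends (e : G.edgeSet) : s(arc e 0, arc e 1) = (e : Sym2 V).map point
  arc_injective (e : G.edgeSet) : Function.Injective (arc e)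
  arc_ne_point (e : G.edgeSet) (t : I) : t ≠ 0 → t ≠ 1 → ∀ v, arc e t ≠ point v
  arc_mem_range_of_ne (e e' : G.edgeSet) : e ≠ e' → ∀ s t : I,
    arc e s = arc e' t → arc e s ∈ Set.range point

lemma isPlanar_iff_nonempty_drawing : IsPlanar G ↔ Nonempty (Drawing G) := by
  have coe_ne (t : I) : ((t : ℝ) ≠ 0 ↔ t ≠ 0) ∧ ((t : ℝ) ≠ 1 ↔ t ≠ 1) :=
    ⟨Set.Icc.coe_ne_zero, Set.Icc.coe_ne_one⟩
  constructor
  · rintro ⟨f, γ, hf, hcont, hends, hinj, hint, hmeet⟩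
    refine ⟨f, γ, hf, hcont, fun e => ?_, hinj, fun e t h₀ h₁ =>
      hint e t ((coe_ne t).1.2 h₀) ((coe_ne t).2.2 h₁), hmeet⟩
    obtain ⟨u, v, he, h₀, h₁⟩ := hends e
    rw [he, Sym2.map_mk, ← h₀, ← h₁]
    rfl
  · rintro ⟨D⟩
    refine ⟨D.point, D.arc, D.point_injective, D.continuous_arc, fun e => ?_, D.arc_injective,
      fun e t h₀ h₁ => D.arc_ne_point e t ((coe_ne t).1.1 h₀) ((coe_ne t).2.1 h₁),
      D.arc_mem_range_of_ne⟩
    have h := D.arc_ends e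
    induction he : (e : Sym2 V) with
    | h u v =>
      rw [he, Sym2.map_mk, Sym2.eq_iff] at h
      rcases h with ⟨h₀, h₁⟩ | ⟨h₀, h₁⟩
      · exact ⟨u, v, rfl, h₀, h₁⟩
      · exact ⟨v, u, Sym2.eq_swap, h₀, h₁⟩

namespace Drawing

lemma arc_eq_zero_or_one_eq_point_iff (D : Drawing G) {e : G.edgeSet} {v : V} :
    D.arc e 0 = D.point v ∨ D.arc e 1 = D.point v ↔ v ∈ (e : Sym2 V) := by
  rw [eq_comm, @eq_comm _ (D.arc e 1), ← Sym2.mem_iff, D.arc_ends, Sym2.mem_map]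
  exact ⟨fun ⟨w, hw, h⟩ => D.point_injective h ▸ hw, fun h => ⟨v, h, rfl⟩⟩

lemma arc_mem_map_point (D : Drawing G) {e : G.edgeSet} {t : I} (ht : t = 0 ∨ t = 1) :
    D.arc e t ∈ (e : Sym2 V).map D.point := by
  rw [← D.arc_ends, Sym2.mem_iff]
  exact ht.imp (congrArg _) (congrArg _)

lemma arc_mem_range_iff (D : Drawing G) {e : G.edgeSet} {t : I} :
    D.arc e t ∈ Set.range D.point ↔ t = 0 ∨ t = 1 := by
  refine ⟨fun ⟨v, hv⟩ => ?_, fun ht => ?_⟩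
  · by_contra! ht
    exact D.arc_ne_point e t ht.1 ht.2 v hv.symm
  · obtain ⟨v, -, hv⟩ := Sym2.mem_map.1 (D.arc_mem_map_point ht)
    exact ⟨v, hv⟩

lemma eq_of_arc_eq (D : Drawing G) {e e' : G.edgeSet} {s t : I} (hs₀ : s ≠ 0) (hs₁ : s ≠ 1)
    (h : D.arc e s = D.arc e' t) : e = e' ∧ s = t := by
  have he : e = e' := by
    by_contra hne
    rcases D.arc_mem_range_iff.1 (D.arc_mem_range_of_ne e e' hne s t h) with hs | hs
    exacts [hs₀ hs, hs₁ hs]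
  subst he
  exact ⟨rfl, D.arc_injective e h⟩

/-- The drawing of a subgraph inherited from a drawing of `G`. -/
def comap (D : Drawing G) (φ : H →g G) (hφ : Function.Injective φ) : Drawing H where
  point := D.point ∘ φ
  arc e := D.arc (φ.mapEdgeSet e)
  point_injective := D.point_injective.comp hφ
  continuous_arc e := D.continuous_arc _
  arc_ends e := by
    rw [D.arc_ends, ← Sym2.map_map]
    rfl
  arc_injective e := D.arc_injective _
  arc_ne_point e t h₀ h₁ v := D.arc_ne_point _ t h₀ h₁ _
  arc_mem_range_of_ne e e' hne s t h := by
    have hne' : φ.mapEdgeSet e ≠ φ.mapEdgeSet e' := (Hom.mapEdgeSet.injective φ hφ).ne hne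
    have hs := D.arc_mem_range_iff.1 (D.arc_mem_range_of_ne _ _ hne' s t h)
    have hmem := D.arc_mem_map_point (e := φ.mapEdgeSet e) hs
    rw [Hom.mapEdgeSet, Sym2.map_map] at hmem
    obtain ⟨v, -, hv⟩ := Sym2.mem_map.1 hmem
    exact ⟨v, hv⟩

end Drawing

lemma IsPlanar.of_hom (hG : IsPlanar G) (φ : H →g G) (hφ : Function.Injective φ) : IsPlanar H :=
  let ⟨D⟩ := isPlanar_iff_nonempty_drawing.1 hG
  isPlanar_iff_nonempty_drawing.2 ⟨D.comap φ hφ⟩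

namespace Drawing

variable (D : Drawing G)

/-- The parameters in the third of the arc of `e` at its endpoint `v`, if `v` is an endpoint. -/
def near (e : G.edgeSet) (v : V) : Set I :=
  {t | (t : ℝ) ≤ 1 / 3 ∧ D.arc e 0 = D.point v ∨ 2 / 3 ≤ (t : ℝ) ∧ D.arc e 1 = D.point v}

/-- The point `v` together with the nearest thirds of the arcs ending there. -/
def star (v : V) : Set (ℝ × ℝ) := insert (D.point v) (⋃ e, D.arc e '' D.near e v)

/-- The middle third of the arc of `e`. -/
def mid (e : G.edgeSet) : Set (ℝ × ℝ) := D.arc e '' {t | (t : ℝ) ∈ Set.Icc (1 / 3) (2 / 3)}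

variable {D} {e : G.edgeSet} {t : I} {v w : V}

lemma mem_near_of_arc_eq_point (h : D.arc e t = D.point v) : t ∈ D.near e v := by
  rcases D.arc_mem_range_iff.1 ⟨v, h.symm⟩ with rfl | rfl
  · exact .inl ⟨by norm_num, h⟩
  · exact .inr ⟨by norm_num, h⟩

lemma arc_eq_point_of_mem_near (h : t ∈ D.near e v) (ht : t = 0 ∨ t = 1) :
    D.arc e t = D.point v := by
  rcases ht with rfl | rfl
  · exact h.elim And.right fun h => absurd h.1 (by norm_num)
  · exact h.elim (fun h => absurd h.1 (by norm_num)) And.right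

lemma eq_of_mem_near (hv : t ∈ D.near e v) (hw : t ∈ D.near e w) : v = w := by
  rcases hv with ⟨h, hv⟩ | ⟨h, hv⟩ <;> rcases hw with ⟨h', hw⟩ | ⟨h', hw⟩
  · exact D.point_injective (hv.symm.trans hw)
  · linarith
  · linarith
  · exact D.point_injective (hv.symm.trans hw)

lemma arc_mem_star_iff : D.arc e t ∈ D.star v ↔ t ∈ D.near e v := by
  refine ⟨fun h => ?_, fun h => .inr (Set.mem_iUnion.2 ⟨e, t, h, rfl⟩)⟩
  rcases h with h | h
  · exact mem_near_of_arc_eq_point h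
  obtain ⟨e', t', ht', h⟩ := Set.mem_iUnion.1 h
  by_cases ht : t = 0 ∨ t = 1
  · have ht'' : t' = 0 ∨ t' = 1 := by
      rw [← D.arc_mem_range_iff, h, D.arc_mem_range_iff]
      exact ht
    exact mem_near_of_arc_eq_point (h ▸ arc_eq_point_of_mem_near ht' ht'')
  · obtain ⟨rfl, rfl⟩ := D.eq_of_arc_eq (fun h => ht (.inl h)) (fun h => ht (.inr h)) h.symm
    exact ht'

lemma eq_of_point_mem_star (h : D.point v ∈ D.star w) : v = w := by
  rcases h with h | h
  · exact D.point_injective h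
  obtain ⟨e, t, ht, h⟩ := Set.mem_iUnion.1 h
  exact eq_of_mem_near (mem_near_of_arc_eq_point h) ht

lemma pairwise_disjoint_star : Pairwise (Function.onFun Disjoint D.star) := by
  refine fun v w hvw => Set.disjoint_left.2 fun p hv hw => hvw ?_
  rcases hv with rfl | hv
  · exact eq_of_point_mem_star hw
  · obtain ⟨e, t, ht, rfl⟩ := Set.mem_iUnion.1 hv
    exact eq_of_mem_near ht (arc_mem_star_iff.1 hw)

lemma pairwise_disjoint_mid : Pairwise (Function.onFun Disjoint D.mid) := by
  refine fun e e' he => Set.disjoint_left.2 ?_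
  rintro _ ⟨t, ht, rfl⟩ ⟨t', -, h⟩
  refine he (D.eq_of_arc_eq ?_ ?_ h.symm).1
  · rintro rfl
    exact absurd ht.1 (by norm_num)
  · rintro rfl
    exact absurd ht.2 (by norm_num)

lemma disjoint_mid_star_iff : Disjoint (D.mid e) (D.star v) ↔ v ∉ (e : Sym2 V) := by
  rw [← D.arc_eq_zero_or_one_eq_point_iff, Set.disjoint_left, ← not_iff_not]
  push Not
  constructor
  · rintro ⟨_, ⟨t, -, rfl⟩, ht⟩
    exact (arc_mem_star_iff.1 ht).imp And.right And.right
  · rintro (h | h)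
    · exact ⟨_, ⟨⟨1 / 3, by norm_num, by norm_num⟩, by norm_num, rfl⟩,
        arc_mem_star_iff.2 (.inl ⟨le_rfl, h⟩)⟩
    · exact ⟨_, ⟨⟨2 / 3, by norm_num, by norm_num⟩, by norm_num, rfl⟩,
        arc_mem_star_iff.2 (.inr ⟨le_rfl, h⟩)⟩

lemma isCompact_star [Finite V] : IsCompact (D.star v) := by
  have hclosed (e : G.edgeSet) : IsClosed (D.near e v) := by
    simp only [near, Set.ofPred_or, Set.ofPred_and]
    exact ((isClosed_le (by fun_prop) (by fun_prop)).inter isClosed_const).union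
      ((isClosed_le (by fun_prop) (by fun_prop)).inter isClosed_const)
  exact (isCompact_iUnion fun e => (hclosed e).isCompact.image (D.continuous_arc e)).insert _

lemma isConnected_star : IsConnected (D.star v) := by
  refine ⟨⟨D.point v, .inl rfl⟩, ?_⟩
  refine isPreconnected_of_forall (D.point v) fun p hp => ?_
  rcases hp with rfl | hp
  · exact ⟨{D.point v}, Set.singleton_subset_iff.2 (.inl rfl), rfl, rfl, isPreconnected_singleton⟩
  obtain ⟨e, t, ⟨ht, hv⟩ | ⟨ht, hv⟩, rfl⟩ := Set.mem_iUnion.1 hp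
  · refine ⟨D.arc e '' Set.Iic t, ?_, ⟨0, t.2.1, hv⟩, ⟨t, Set.self_mem_Iic, rfl⟩,
      isPreconnected_Iic.image _ (D.continuous_arc e).continuousOn⟩
    rintro _ ⟨s, hs, rfl⟩
    exact arc_mem_star_iff.2 (.inl ⟨(Subtype.coe_le_coe.2 hs).trans ht, hv⟩)
  · refine ⟨D.arc e '' Set.Ici t, ?_, ⟨1, t.2.2, hv⟩, ⟨t, Set.self_mem_Ici, rfl⟩,
      isPreconnected_Ici.image _ (D.continuous_arc e).continuousOn⟩
    rintro _ ⟨s, hs, rfl⟩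
    exact arc_mem_star_iff.2 (.inr ⟨ht.trans (Subtype.coe_le_coe.2 hs), hv⟩)

lemma isCompact_mid : IsCompact (D.mid e) :=
  (isClosed_Icc.preimage continuous_subtype_val).isCompact.image (D.continuous_arc e)

lemma isConnected_mid : IsConnected (D.mid e) := by
  have half_mem : (⟨1 / 2, by norm_num, by norm_num⟩ : I) ∈
      {t : I | (t : ℝ) ∈ Set.Icc (1 / 3) (2 / 3)} := by norm_num
  refine IsConnected.image ⟨⟨_, half_mem⟩, Set.OrdConnected.isPreconnected ?_⟩ _
    (D.continuous_arc e).continuousOn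
  exact Set.ordConnected_Icc.preimage_mono fun _ _ h => h

end Drawing

end Drawing

section Bricks

open Set

/-- The closed brick with index `x` in a brick wall of scale `1 / n`, each row being shifted by half
a brick against the previous one, so that bricks touch exactly when their indices are adjacent in
the triangular lattice. -/
def brick (n : ℝ) (x : ℤ × ℤ) : Set (ℝ × ℝ) :=
  {p | n * p.1 ∈ Icc (2 * x.1 + x.2 : ℝ) (2 * x.1 + x.2 + 2) ∧ n * p.2 ∈ Icc (x.2 : ℝ) (x.2 + 1)}

/-- The indices of the bricks that meet `B`. -/
def bricks (n : ℝ) (B : Set (ℝ × ℝ)) : Set (ℤ × ℤ) := {x | (brick n x ∩ B).Nonempty}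

variable {n : ℝ} {A B : Set (ℝ × ℝ)}

lemma exists_mem_brick (n : ℝ) (p : ℝ × ℝ) : ∃ x, p ∈ brick n x := by
  refine ⟨(⌊(n * p.1 - ⌊n * p.2⌋) / 2⌋, ⌊n * p.2⌋), ?_⟩
  have h₁ := Int.floor_le (n * p.2)
  have h₂ := Int.lt_floor_add_one (n * p.2)
  have h₃ := Int.floor_le ((n * p.1 - ⌊n * p.2⌋) / 2)
  have h₄ := Int.lt_floor_add_one ((n * p.1 - ⌊n * p.2⌋) / 2)
  refine ⟨⟨?_, ?_⟩, ?_, ?_⟩ <;> dsimp only <;> linarith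

lemma eq_or_adj_of_mem_brick {p : ℝ × ℝ} {x y : ℤ × ℤ} (hx : p ∈ brick n x) (hy : p ∈ brick n y) :
    x = y ∨ latticeGraph.Adj x y := by
  obtain ⟨i, j⟩ := x
  obtain ⟨k, l⟩ := y
  obtain ⟨⟨hx₁, hx₂⟩, hx₃, hx₄⟩ := hx
  obtain ⟨⟨hy₁, hy₂⟩, hy₃, hy₄⟩ := hy
  have h₁ : 2 * i + j ≤ 2 * k + l + 2 := by exact_mod_cast hx₁.trans hy₂
  have h₂ : 2 * k + l ≤ 2 * i + j + 2 := by exact_mod_cast hy₁.trans hx₂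
  have h₃ : j ≤ l + 1 := by exact_mod_cast hx₃.trans hy₄
  have h₄ : l ≤ j + 1 := by exact_mod_cast hy₃.trans hx₄
  have hcases : (l = j ∧ k = i) ∨ (l = j ∧ k = i + 1) ∨ (l = j ∧ i = k + 1) ∨
      (l = j + 1 ∧ k = i) ∨ (l = j + 1 ∧ i = k + 1) ∨ (j = l + 1 ∧ k = i) ∨
      (j = l + 1 ∧ k = i + 1) := by omega
  rw [latticeGraph_adj_iff]
  rcases hcases with ⟨rfl, rfl⟩ | ⟨rfl, rfl⟩ | ⟨rfl, rfl⟩ | ⟨rfl, rfl⟩ | ⟨rfl, rfl⟩ | ⟨rfl, rfl⟩ |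
    ⟨rfl, rfl⟩
  · exact .inl rfl
  · exact .inr ⟨.h i l, rfl⟩
  · exact .inr ⟨.h k l, Sym2.eq_swap⟩
  · exact .inr ⟨.v k j, rfl⟩
  · exact .inr ⟨.d k j, rfl⟩
  · exact .inr ⟨.v k l, Sym2.eq_swap⟩
  · exact .inr ⟨.d i l, Sym2.eq_swap⟩

lemma isClosed_brick (n : ℝ) (x : ℤ × ℤ) : IsClosed (brick n x) :=
  (isClosed_Icc.preimage (by fun_prop)).inter (isClosed_Icc.preimage (by fun_prop))

lemma dist_le_of_mem_brick (hn : 0 < n) {p q : ℝ × ℝ} {x : ℤ × ℤ} (hp : p ∈ brick n x)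
    (hq : q ∈ brick n x) : dist p q ≤ 2 / n := by
  have hmul (a b : ℝ) : n * dist a b = dist (n * a) (n * b) := by
    rw [Real.dist_eq, Real.dist_eq, ← mul_sub, abs_mul, abs_of_pos hn]
  rw [le_div_iff₀' hn, Prod.dist_eq, mul_max_of_nonneg _ _ hn.le, hmul, hmul, max_le_iff]
  constructor
  · linarith [Real.dist_le_of_mem_Icc hp.1 hq.1]
  · linarith [Real.dist_le_of_mem_Icc hp.2 hq.2]

lemma finite_bricks (n : ℝ) (hB : IsCompact B) : (bricks n B).Finite := by
  obtain ⟨C, hC⟩ := (hB.image (continuous_const_smul n)).isBounded.exists_norm_le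
  obtain ⟨K, hK⟩ := exists_nat_ge C
  refine ((finite_Icc (-(2 * K + 3) : ℤ) (2 * K + 3)).prod
    (finite_Icc (-(2 * K + 3) : ℤ) (2 * K + 3))).subset ?_
  rintro ⟨i, j⟩ ⟨p, ⟨⟨h₁, h₂⟩, h₃, h₄⟩, hp⟩
  have hp' : ‖n • p‖ ≤ K := (hC _ ⟨p, hp, rfl⟩).trans hK
  obtain ⟨h₅, h₆⟩ := abs_le.1 ((norm_fst_le (n • p)).trans hp')
  obtain ⟨h₇, h₈⟩ := abs_le.1 ((norm_snd_le (n • p)).trans hp')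
  have h₁₆ : 2 * i + j ≤ K := by exact_mod_cast h₁.trans h₆
  have h₅₂ : -K ≤ 2 * i + j + 2 := by exact_mod_cast h₅.trans h₂
  have h₃₈ : j ≤ K := by exact_mod_cast h₃.trans h₈
  have h₇₄ : -K ≤ j + 1 := by exact_mod_cast h₇.trans h₄
  simp only [mem_prod, mem_Icc]
  omega

lemma connected_induce_bricks (n : ℝ) (hB : IsCompact B) (hB' : IsConnected B) :
    (latticeGraph.induce (bricks n B)).Connected := by
  have hfin := finite_bricks n hB
  have exists_brick {p : ℝ × ℝ} (hp : p ∈ B) : ∃ x : bricks n B, p ∈ brick n x := by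
    obtain ⟨x, hx⟩ := exists_mem_brick n p
    exact ⟨⟨x, p, hx, hp⟩, hx⟩
  obtain ⟨⟨p, hp⟩, hpre⟩ := hB'
  refine (connected_iff _).2 ⟨fun x y => ?_, (exists_brick hp).nonempty⟩
  by_contra hxy
  let wall (S : Set (bricks n B)) : Set (ℝ × ℝ) := ⋃ z ∈ S, brick n z
  have isClosed_wall (S : Set (bricks n B)) : IsClosed (wall S) :=
    have := hfin.to_subtype
    S.toFinite.isClosed_biUnion fun z _ => isClosed_brick n z
  have meets_wall {S : Set (bricks n B)} {z : bricks n B} (hz : z ∈ S) : (B ∩ wall S).Nonempty := by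
    obtain ⟨q, hq, hqB⟩ := z.2
    exact ⟨q, hqB, mem_biUnion hz hq⟩
  let S : Set (bricks n B) := {z | (latticeGraph.induce _).Reachable x z}
  have hcover : B ⊆ wall S ∪ wall Sᶜ := fun q hq => by
    obtain ⟨z, hz⟩ := exists_brick hq
    exact (em (z ∈ S)).imp (mem_biUnion · hz) (mem_biUnion (s := Sᶜ) · hz)
  obtain ⟨q, -, hq, hq'⟩ := isPreconnected_closed_iff.1 hpre (wall S) (wall Sᶜ) (isClosed_wall _)
    (isClosed_wall _) hcover (meets_wall (z := x) .rfl) (meets_wall hxy)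
  obtain ⟨z, hz, hqz⟩ := mem_iUnion₂.1 hq
  obtain ⟨z', hz', hqz'⟩ := mem_iUnion₂.1 hq'
  rcases eq_or_adj_of_mem_brick hqz hqz' with h | h
  · exact hz' (Subtype.ext h ▸ hz)
  · exact hz' (hz.trans (Adj.reachable (G := latticeGraph.induce _) h))

lemma not_disjoint_bricks (n : ℝ) (h : ¬Disjoint A B) : ¬Disjoint (bricks n A) (bricks n B) := by
  obtain ⟨p, hA, hB⟩ := not_disjoint_iff.1 h
  obtain ⟨x, hx⟩ := exists_mem_brick n p
  exact not_disjoint_iff.2 ⟨x, ⟨p, hx, hA⟩, p, hx, hB⟩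

open Filter in
lemma eventually_disjoint_bricks (hA : IsCompact A) (hB : IsCompact B) (h : Disjoint A B) :
    ∀ᶠ n : ℝ in atTop, Disjoint (bricks n A) (bricks n B) := by
  obtain ⟨δ, hδ, hdisj⟩ := h.exists_thickenings hA hB.isClosed
  filter_upwards [eventually_gt_atTop 0, eventually_gt_atTop (2 / δ)] with n hn hnδ
  refine disjoint_left.2 ?_
  rintro x ⟨p, hp, hpA⟩ ⟨q, hq, hqB⟩
  have hpq : dist p q < δ :=
    (dist_le_of_mem_brick hn hp hq).trans_lt ((div_lt_comm₀ hδ hn).1 hnδ)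
  exact disjoint_left.1 hdisj (Metric.self_subset_thickening hδ _ hpA)
    (Metric.mem_thickening_iff.2 ⟨q, hqB, hpq⟩)

end Bricks

section PlanarModel

open Filter Set

variable {V X : Type*} {G : SimpleGraph V} {L : SimpleGraph X}

lemma connected_induce_union_iUnion {ι : Type*} {S : Set X} {R : ι → Set X}
    (hS : (L.induce S).Connected) (hR : ∀ i, (L.induce (R i)).Connected)
    (hSR : ∀ i, (S ∩ R i).Nonempty) : (L.induce (S ∪ ⋃ i, R i)).Connected := by
  obtain ⟨u⟩ := hS.nonempty
  refine induce_connected_of_patches u (.inl u.2) fun {v} hv => ?_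
  rcases hv with hv | hv
  · exact ⟨S, subset_union_left, u.2, hv, hS.preconnected _ _⟩
  · obtain ⟨i, hi⟩ := mem_iUnion.1 hv
    exact ⟨S ∪ R i, union_subset_union_right _ (subset_iUnion R i), .inl u.2, .inr hi,
      (induce_union_connected hS.preconnected (hR i).preconnected (hSR i)).preconnected _ _⟩

lemma exists_walk_adj_of_walk {B : Set X} {a b : X} (p : L.Walk a b) (ha : a ∉ B) (hb : b ∈ B) :
    ∃ (y w : X) (q : L.Walk a y), (∀ x ∈ q.support, x ∈ p.support ∧ x ∉ B) ∧ w ∈ B ∧ L.Adj y w := by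
  induction p with
  | nil => exact absurd hb ha
  | @cons a c b hac p ih =>
    by_cases hc : c ∈ B
    · refine ⟨a, c, .nil, fun x hx => ?_, hc, hac⟩
      obtain rfl : x = a := by simpa using hx
      exact ⟨p.support.mem_cons_self, ha⟩
    · obtain ⟨y, w, q, hq, hw, hyw⟩ := ih hc hb
      refine ⟨y, w, .cons hac q, fun x hx => ?_, hw, hyw⟩
      rw [Walk.support_cons, List.mem_cons] at hx ⊢
      rcases hx with rfl | hx
      · exact ⟨.inl rfl, ha⟩
      · exact (hq x hx).imp_left .inr

lemma exists_connected_of_connected {Q A B : Set X} (hQ : (L.induce Q).Connected)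
    (hA : (Q ∩ A).Nonempty) (hB : (Q ∩ B).Nonempty) (hAB : Disjoint A B) :
    ∃ R ⊆ Q, R.Finite ∧ (L.induce R).Connected ∧ (A ∩ R).Nonempty ∧ Disjoint R B ∧
      ∃ y ∈ R, ∃ w ∈ B, L.Adj y w := by
  obtain ⟨a, haQ, ha⟩ := hA
  obtain ⟨b, hbQ, hb⟩ := hB
  obtain ⟨p⟩ := hQ.preconnected ⟨a, haQ⟩ ⟨b, hbQ⟩
  let p' := p.map (Embedding.induce Q).toHom
  have hp' (x : X) (hx : x ∈ p'.support) : x ∈ Q := by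
    rw [Walk.support_map, List.mem_map] at hx
    obtain ⟨z, -, rfl⟩ := hx
    exact z.2
  obtain ⟨y, w, q, hq, hw, hyw⟩ := exists_walk_adj_of_walk p' (disjoint_left.1 hAB ha) hb
  exact ⟨{x | x ∈ q.support}, fun x hx => hp' x (hq x hx).1, List.finite_toSet _,
    q.connected_induce_support, ⟨a, ha, q.start_mem_support⟩,
    disjoint_left.2 fun x hx => (hq x hx).2, y, q.end_mem_support, w, hw, hyw⟩

lemma nonempty_latticeModel_of_adj {U : V → Set (ℤ × ℤ)} (hfin : ∀ v, (U v).Finite)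
    (hconn : ∀ v, (latticeGraph.induce (U v)).Connected)
    (hdisj : Pairwise (Function.onFun Disjoint U))
    (hadj : ∀ e : G.edgeSet, ∃ u v, (e : Sym2 V) = s(u, v) ∧
      ∃ x ∈ U u, ∃ y ∈ U v, latticeGraph.Adj x y) :
    Nonempty (LatticeModel G) := by
  classical
  let label (x : ℤ × ℤ) : Option V := if h : ∃ v, x ∈ U v then some h.choose else none
  have label_eq_some {x : ℤ × ℤ} {v : V} (hx : x ∈ U v) : label x = some v := by
    have h : ∃ v, x ∈ U v := ⟨v, hx⟩
    rw [show label x = some h.choose from dif_pos h]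
    by_contra hne
    exact disjoint_left.1 (hdisj fun h => hne (congrArg some h)) h.choose_spec hx
  have setOf_label (v : V) : {x | label x = some v} = U v := by
    refine Subset.antisymm (fun x hx => ?_) fun x => label_eq_some
    by_cases h : ∃ v, x ∈ U v
    · obtain ⟨w, hw⟩ := h
      exact Option.some_injective _ ((label_eq_some hw).symm.trans hx) ▸ hw
    · exact absurd ((dif_neg h).symm.trans hx) (by simp)
  have hedge (e : G.edgeSet) : ∃ l : LatticeEdge, l.ends.map label = (e : Sym2 V).map some := by
    obtain ⟨u, v, he, x, hx, y, hy, hxy⟩ := hadj e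
    obtain ⟨l, hl⟩ := latticeGraph_adj_iff.1 hxy
    exact ⟨l, by rw [hl, he, Sym2.map_mk, label_eq_some hx, label_eq_some hy, Sym2.map_mk]⟩
  choose edge hedge using hedge
  exact ⟨label, fun v => setOf_label v ▸ hfin v, fun v => setOf_label v ▸ hconn v, edge, hedge⟩

lemma nonempty_latticeModel_of_disjoint_iff [Finite V] {U : V → Set (ℤ × ℤ)}
    {Q : G.edgeSet → Set (ℤ × ℤ)} (hfin : ∀ v, (U v).Finite)
    (hU : ∀ v, (latticeGraph.induce (U v)).Connected)
    (hUU : Pairwise (Function.onFun Disjoint U)) (hQ : ∀ e, (latticeGraph.induce (Q e)).Connected)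
    (hQQ : Pairwise (Function.onFun Disjoint Q))
    (hQU : ∀ e v, Disjoint (Q e) (U v) ↔ v ∉ (e : Sym2 V)) : Nonempty (LatticeModel G) := by
  have hrep (e : G.edgeSet) : ∃ u v, (e : Sym2 V) = s(u, v) := by
    induction (e : Sym2 V) with | h u v
    exact ⟨u, v, rfl⟩
  choose tail head hends using hrep
  have tail_ne_head (e : G.edgeSet) : tail e ≠ head e := by
    have he : s(tail e, head e) ∈ G.edgeSet := hends e ▸ e.2
    exact he.ne
  have meets {e : G.edgeSet} {v : V} (hv : v ∈ (e : Sym2 V)) : (Q e ∩ U v).Nonempty :=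
    not_disjoint_iff_nonempty_inter.1 fun h => (hQU e v).1 h hv
  choose R hRQ hRfin hR hRtail hRhead y hy w hw hyw using fun e => exists_connected_of_connected
    (hQ e) (meets (hends e ▸ Sym2.mem_mk_left _ _)) (meets (hends e ▸ Sym2.mem_mk_right _ _))
    (hUU (tail_ne_head e))
  have disjoint_R_U {e : G.edgeSet} {v : V} (hv : tail e ≠ v) : Disjoint (R e) (U v) := by
    by_cases hve : v ∈ (e : Sym2 V)
    · obtain rfl : v = head e := ((Sym2.mem_iff.1 (hends e ▸ hve)).resolve_left hv.symm)
      exact hRhead e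
    · exact ((hQU e v).2 hve).mono_left (hRQ e)
  let branch (v : V) : Set (ℤ × ℤ) := U v ∪ ⋃ e : {e // tail e = v}, R e
  refine nonempty_latticeModel_of_adj (U := branch) (fun v => ?_) (fun v => ?_) (fun u v huv => ?_)
    fun e => ⟨tail e, head e, hends e, y e, .inr (mem_iUnion.2 ⟨⟨e, rfl⟩, hy e⟩),
      w e, .inl (hw e), hyw e⟩
  · exact (hfin v).union (finite_iUnion fun e => hRfin e)
  · exact connected_induce_union_iUnion (hU v) (fun e => hR e) fun ⟨e, he⟩ => he ▸ hRtail e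
  · simp only [Function.onFun, branch, disjoint_union_left, disjoint_union_right,
      disjoint_iUnion_left, disjoint_iUnion_right]
    refine ⟨⟨hUU huv, fun ⟨e, he⟩ => disjoint_R_U (he.trans_ne huv)⟩, fun ⟨e, he⟩ =>
      ⟨(disjoint_R_U (he.trans_ne huv.symm)).symm, fun ⟨e', he'⟩ => ?_⟩⟩
    have hne : e' ≠ e := by
      rintro rfl
      exact huv (he'.symm.trans he)
    exact (hQQ hne).mono (hRQ e') (hRQ e)

lemma IsPlanar.nonempty_latticeModel [Finite V] (hG : IsPlanar G) : Nonempty (LatticeModel G) := by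
  obtain ⟨D⟩ := isPlanar_iff_nonempty_drawing.1 hG
  have hstar (v : V) : IsCompact (D.star v) := Drawing.isCompact_star
  have hmid (e : G.edgeSet) : IsCompact (D.mid e) := Drawing.isCompact_mid
  have hscale : ∀ᶠ n : ℝ in atTop,
      (∀ u v, u ≠ v → Disjoint (bricks n (D.star u)) (bricks n (D.star v))) ∧
      (∀ e e' : G.edgeSet, e ≠ e' → Disjoint (bricks n (D.mid e)) (bricks n (D.mid e'))) ∧
      ∀ (e : G.edgeSet) (v : V), v ∉ (e : Sym2 V) →
        Disjoint (bricks n (D.mid e)) (bricks n (D.star v)) := by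
    simp only [eventually_and, eventually_all]
    exact ⟨fun u v h => eventually_disjoint_bricks (hstar u) (hstar v)
      (Drawing.pairwise_disjoint_star h), fun e e' h => eventually_disjoint_bricks (hmid e)
      (hmid e') (Drawing.pairwise_disjoint_mid h), fun e v h =>
      eventually_disjoint_bricks (hmid e) (hstar v) (Drawing.disjoint_mid_star_iff.2 h)⟩
  obtain ⟨n, hUU, hQQ, hQU⟩ := hscale.exists
  refine nonempty_latticeModel_of_disjoint_iff (fun v => finite_bricks n (hstar v))
    (fun v => connected_induce_bricks n (hstar v) Drawing.isConnected_star) hUU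
    (fun e => connected_induce_bricks n (hmid e) Drawing.isConnected_mid) hQQ
    fun e v => ⟨fun h hv => ?_, hQU e v⟩
  exact not_disjoint_bricks n (fun h' => Drawing.disjoint_mid_star_iff.1 h' hv) h

theorem IsPlanar.card_edgeSet_add_four_le [Finite V] (hG : IsPlanar G) (hG' : G.CliqueFree 3)
    (hV : 3 ≤ Nat.card V) : Nat.card G.edgeSet + 4 ≤ 2 * Nat.card V :=
  let ⟨M⟩ := hG.nonempty_latticeModel
  M.hasDual.card_edgeSet_add_four_le hG' hV

end PlanarModel

section PlanarUnion

variable {V W : Type*} {G : SimpleGraph V} {n : ℕ}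

/-- `G` is the union of `n` planar subgraphs, as in `thickness`. -/
def IsPlanarUnion (G : SimpleGraph V) (n : ℕ) : Prop :=
  ∃ H : Fin n → SimpleGraph V, (∀ i, H i ≤ G) ∧ (∀ i, IsPlanar (H i)) ∧ (⨆ i, H i) = G

lemma thickness_eq_of_isPlanarUnion (h : IsPlanarUnion G n)
    (hmin : ∀ k, IsPlanarUnion G k → n ≤ k) : thickness G = n :=
  le_antisymm (Nat.sInf_le h) (le_csInf ⟨n, h⟩ hmin)

lemma isPlanarUnion_of_forall_adj {H : Fin n → SimpleGraph W} (hH : ∀ i, IsPlanar (H i))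
    {φ : V → W} (hφ : Function.Injective φ)
    (hadj : ∀ u v, G.Adj u v → ∃ i, (H i).Adj (φ u) (φ v)) :
    IsPlanarUnion G n := by
  refine ⟨fun i => G ⊓ (H i).comap φ, fun i => inf_le_left, fun i => ?_,
    le_antisymm (iSup_le fun i => inf_le_left) fun u v huv => ?_⟩
  · exact (hH i).of_hom ⟨φ, fun h => h.2⟩ hφ
  · obtain ⟨i, hi⟩ := hadj u v huv
    exact iSup_adj.2 ⟨i, huv, hi⟩

lemma IsPlanarUnion.of_hom {H : SimpleGraph W} (h : IsPlanarUnion H n) (φ : G →g H)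
    (hφ : Function.Injective φ) : IsPlanarUnion G n := by
  obtain ⟨L, -, hL, rfl⟩ := h
  exact isPlanarUnion_of_forall_adj hL hφ fun u v huv => iSup_adj.1 (φ.map_rel huv)

lemma IsPlanarUnion.card_edgeSet_add_four_mul_le [Finite V] (h : IsPlanarUnion G n)
    (hG : G.CliqueFree 3) (hV : 3 ≤ Nat.card V) :
    Nat.card G.edgeSet + 4 * n ≤ n * (2 * Nat.card V) := by
  obtain ⟨H, hHG, hH, rfl⟩ := h
  have hle (i : Fin n) : (H i).edgeSet.ncard + 4 ≤ 2 * Nat.card V :=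
    (hH i).card_edgeSet_add_four_le (hG.anti (hHG i)) hV
  calc Nat.card (⨆ i, H i).edgeSet + 4 * n
      ≤ ∑ i, (H i).edgeSet.ncard + 4 * n := by
        rw [edgeSet_iSup, Nat.card_coe_set_eq]
        gcongr
        exact Set.ncard_iUnion_le_of_fintype _
    _ = ∑ i, ((H i).edgeSet.ncard + 4) := by
        rw [Finset.sum_add_distrib, Finset.sum_const, Finset.card_fin, smul_eq_mul, mul_comm 4]
    _ ≤ ∑ _i : Fin n, 2 * Nat.card V := Finset.sum_le_sum fun i _ => hle i
    _ = n * (2 * Nat.card V) := by rw [Finset.sum_const, Finset.card_fin, smul_eq_mul]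

lemma add_two_le_of_isPlanarUnion_completeBipartiteGraph {m p : ℕ} (hm : 4 * p + 3 ≤ m)
    (h : IsPlanarUnion (completeBipartiteGraph (Fin m) (Fin m)) n) : p + 2 ≤ n := by
  have hfree : (completeBipartiteGraph (Fin m) (Fin m)).CliqueFree 3 :=
    Colorable.cliqueFree (CompleteBipartiteGraph.bicoloring _ _).colorable (by simp)
  have hcard : Nat.card (completeBipartiteGraph (Fin m) (Fin m)).edgeSet = m * m := by
    rw [Nat.card_coe_set_eq, Set.ncard, encard_edgeSet_completeBipartiteGraph]
    simp
  have hle := h.card_edgeSet_add_four_mul_le hfree (by rw [Nat.card_sum, Nat.card_fin]; omega)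
  rw [hcard, Nat.card_sum, Nat.card_fin] at hle
  by_contra! hn
  obtain ⟨k, rfl⟩ : ∃ k, m = k + 1 := ⟨m - 1, by omega⟩
  have : 4 * n * k ≤ (k + 2) * k := Nat.mul_le_mul_right k (by omega)
  linarith

end PlanarUnion

section ArcSystem

open unitInterval

/-- A drawing in the plane of a graph on `V` whose edges are listed by `E`, in a form suited to
explicit formulas: arcs are oriented and defined on the whole line, but only their restrictions
to `[0, 1]` matter. -/
structure ArcSystem (V E : Type*) where
  src : E → V
  tgt : E → V
  point : V → ℝ × ℝ
  arc : E → ℝ → ℝ × ℝ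
  src_ne_tgt (e : E) : src e ≠ tgt e
  point_injective : Function.Injective point
  continuous_arc (e : E) : Continuous (arc e)
  arc_zero (e : E) : arc e 0 = point (src e)
  arc_one (e : E) : arc e 1 = point (tgt e)
  arc_ne_point (e : E) (t : ℝ) : t ∈ Set.Ioo 0 1 → ∀ v, arc e t ≠ point v
  arc_inj (e e' : E) (s t : ℝ) : s ∈ Set.Ioo 0 1 → t ∈ Set.Ioo 0 1 → arc e s = arc e' t →
    e = e' ∧ s = t

namespace ArcSystem

variable {V E : Type*} (A : ArcSystem V E)

/-- The graph drawn by `A`. -/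
def graph : SimpleGraph V := .fromEdgeSet (Set.range fun e => s(A.src e, A.tgt e))

lemma adj (e : E) : A.graph.Adj (A.src e) (A.tgt e) :=
  (fromEdgeSet_adj _).2 ⟨⟨e, rfl⟩, A.src_ne_tgt e⟩

variable {A}

lemma mem_Ioo_of_arc_eq {e e' : E} {s t : I} (hs : (s : ℝ) ∈ Set.Ioo 0 1)
    (h : A.arc e s = A.arc e' t) : (t : ℝ) ∈ Set.Ioo 0 1 := by
  rw [Set.mem_Ioo, unitInterval.coe_pos, unitInterval.coe_lt_one, unitInterval.pos_iff_ne_zero,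
    unitInterval.lt_one_iff_ne_one]
  constructor <;> rintro rfl
  · exact A.arc_ne_point e s hs _ (h.trans (A.arc_zero e'))
  · exact A.arc_ne_point e s hs _ (h.trans (A.arc_one e'))

lemma eq_zero_or_eq_one_or_mem_Ioo (t : I) : t = 0 ∨ t = 1 ∨ (t : ℝ) ∈ Set.Ioo 0 1 := by
  rw [Set.mem_Ioo, unitInterval.coe_pos, unitInterval.coe_lt_one, unitInterval.pos_iff_ne_zero,
    unitInterval.lt_one_iff_ne_one]
  tauto

lemma injective_arc_restrict (e : E) : Function.Injective fun t : I => A.arc e t := by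
  have zero_ne_one : A.arc e 0 ≠ A.arc e 1 := by
    rw [arc_zero, arc_one]
    exact A.point_injective.ne (A.src_ne_tgt e)
  intro s t (h : A.arc e s = A.arc e t)
  by_cases hs : (s : ℝ) ∈ Set.Ioo 0 1
  · exact Subtype.ext (A.arc_inj e e s t hs (mem_Ioo_of_arc_eq hs h) h).2
  · have ht : (t : ℝ) ∉ Set.Ioo 0 1 := fun ht => hs (mem_Ioo_of_arc_eq ht h.symm)
    rcases eq_zero_or_eq_one_or_mem_Ioo s with rfl | rfl | hs' <;>
      rcases eq_zero_or_eq_one_or_mem_Ioo t with rfl | rfl | ht'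
    · rfl
    · exact absurd h zero_ne_one
    · exact absurd ht' ht
    · exact absurd h.symm zero_ne_one
    · rfl
    · exact absurd ht' ht
    all_goals exact absurd hs' hs

variable (A)

theorem isPlanar_graph : IsPlanar A.graph := by
  have hrep (e : A.graph.edgeSet) : ∃ i, s(A.src i, A.tgt i) = (e : Sym2 V) := by
    have he : (e : Sym2 V) ∈ (fromEdgeSet (Set.range fun i => s(A.src i, A.tgt i))).edgeSet := e.2
    rw [edgeSet_fromEdgeSet] at he
    exact he.1
  choose index hindex using hrep
  refine isPlanar_iff_nonempty_drawing.2 ⟨{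
    point := A.point
    arc := fun e t => A.arc (index e) t
    point_injective := A.point_injective
    continuous_arc := fun e => (A.continuous_arc _).comp continuous_subtype_val
    arc_ends := fun e => ?_
    arc_injective := fun e => injective_arc_restrict (index e)
    arc_ne_point := fun e t h₀ h₁ => A.arc_ne_point _ t ?_
    arc_mem_range_of_ne := fun e e' hne s t h => ?_ }⟩
  · rw [← hindex e, Sym2.map_mk, ← A.arc_zero, ← A.arc_one]
    rfl
  · exact ((eq_zero_or_eq_one_or_mem_Ioo t).resolve_left h₀).resolve_left h₁
  · rcases eq_zero_or_eq_one_or_mem_Ioo s with rfl | rfl | hs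
    · exact ⟨_, (A.arc_zero _).symm⟩
    · exact ⟨_, (A.arc_one _).symm⟩
    · have hindex_eq := (A.arc_inj _ _ s t hs (mem_Ioo_of_arc_eq hs h) h).1
      exact absurd (Subtype.ext (by rw [← hindex e, ← hindex e', hindex_eq])) hne

end ArcSystem

end ArcSystem

section DoubleFan

lemma eq_and_eq_of_natCast_add_eq {a b : ℕ} {s t : ℝ} (hs : s ∈ Set.Ico 0 1)
    (ht : t ∈ Set.Ico 0 1) (h : (a : ℝ) + s = b + t) : a = b ∧ s = t := by
  have hab : a = b := by
    have hfloor := congrArg Int.floor h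
    simpa only [Int.floor_natCast_add, Int.floor_eq_zero_iff.2 hs, Int.floor_eq_zero_iff.2 ht,
      add_zero, Nat.cast_inj] using hfloor
  exact ⟨hab, by simpa only [hab, add_right_inj] using h⟩

/-- The sign of the `y`-coordinates of the row of vertices `b`; `true` is the upper row. -/
def halfSign (b : Bool) : ℝ := cond b 1 (-1)

lemma halfSign_ne_zero (b : Bool) : halfSign b ≠ 0 := by cases b <;> norm_num [halfSign]

lemma halfSign_mul_cancel {b b' : Bool} {s t : ℝ} (hs : 0 < s) (ht : 0 < t)
    (h : halfSign b * s = halfSign b' * t) : b = b' ∧ s = t := by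
  cases b <;> cases b' <;> simp only [halfSign, cond_true, cond_false] at h
  exacts [⟨rfl, by linarith⟩, by linarith, by linarith, ⟨rfl, by linarith⟩]

lemma halfSign_injective : Function.Injective halfSign := by
  intro b b' h
  exact (halfSign_mul_cancel one_pos one_pos (by rw [h])).1

/-- The edges of `doubleFan`. -/
inductive FanEdge
  | hubs
  | spoke (b : Bool) (k : ℕ)
  | rung (shift : Bool) (k : ℕ)

namespace FanEdge

/-- The initial vertex of an edge. -/
def src : FanEdge → Bool × ℕ
  | hubs => (false, 0)
  | spoke b _ => (b, 0)
  | rung _ k => (false, k + 1)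

/-- The final vertex of an edge. -/
def tgt : FanEdge → Bool × ℕ
  | hubs => (true, 0)
  | spoke b k => (b, k + 1)
  | rung shift k => (true, k + 1 + shift.toNat)

/-- The straight segment from `e.src` to `e.tgt`. The edge between the hubs runs along `x = 0`; off
this line, the spokes have height `1 < |y| < 3` and the rungs have height `|y| < 1`. -/
noncomputable def arc : FanEdge → ℝ → ℝ × ℝ
  | hubs, t => (0, 3 * (2 * t - 1))
  | spoke b k, t => ((k + 1) * t, halfSign b * (3 - 2 * t))
  | rung shift k, t => (k + 1 + shift.toNat * t, 2 * t - 1)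

end FanEdge

/-- The position of a vertex of `doubleFan`: the rows lie on `y = ±1` and the hubs at `(0, ±3)`. -/
def fanPoint (v : Bool × ℕ) : ℝ × ℝ := (v.2, halfSign v.1 * if v.2 = 0 then 3 else 1)

lemma fanPoint_injective : Function.Injective fanPoint := by
  rintro ⟨b, k⟩ ⟨b', l⟩ h
  obtain ⟨hx, hy⟩ := Prod.mk.inj h
  obtain rfl : k = l := Nat.cast_injective hx
  have height_pos : (0 : ℝ) < if k = 0 then 3 else 1 := by split_ifs <;> norm_num
  exact Prod.ext (halfSign_mul_cancel height_pos height_pos hy).1 rfl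

namespace FanEdge

lemma arc_ne_fanPoint (e : FanEdge) {t : ℝ} (ht : t ∈ Set.Ioo 0 1) (v : Bool × ℕ) :
    e.arc t ≠ fanPoint v := by
  obtain ⟨ht₀, ht₁⟩ := ht
  obtain ⟨b', l⟩ := v
  intro h
  obtain ⟨hx, hy⟩ := Prod.ext_iff.1 h
  rcases e with _ | ⟨b, k⟩ | ⟨shift, k⟩ <;> simp only [arc, fanPoint] at hx hy
  · rw [if_pos (by exact_mod_cast hx.symm)] at hy
    cases b' <;> simp only [halfSign, cond_true, cond_false] at hy <;> linarith
  · have x_pos : 0 < (k + 1) * t := by positivity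
    rw [if_neg (by rintro rfl; exact x_pos.ne' (by simpa using hx))] at hy
    linarith [(halfSign_mul_cancel (by linarith) one_pos hy).2]
  · cases b' <;> split_ifs at hy <;> simp only [halfSign, cond_true, cond_false] at hy <;> linarith

lemma arc_inj (e e' : FanEdge) {s t : ℝ} (hs : s ∈ Set.Ioo 0 1) (ht : t ∈ Set.Ioo 0 1)
    (h : e.arc s = e'.arc t) : e = e' ∧ s = t := by
  obtain ⟨hs₀, hs₁⟩ := hs
  obtain ⟨ht₀, ht₁⟩ := ht
  obtain ⟨hx, hy⟩ := Prod.ext_iff.1 h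
  rcases e with _ | ⟨b, k⟩ | ⟨shift, k⟩ <;> rcases e' with _ | ⟨b', l⟩ | ⟨shift', l⟩ <;>
    simp only [arc] at hx hy
  · exact ⟨rfl, by linarith⟩
  · exact absurd hx (by positivity)
  · exact absurd hx (by positivity)
  · exact absurd hx (by positivity)
  · obtain ⟨rfl, hst⟩ := halfSign_mul_cancel (by linarith) (by linarith) hy
    obtain rfl : s = t := by linarith
    obtain rfl : k = l :=
      Nat.cast_injective (add_right_cancel (mul_right_cancel₀ hs₀.ne' hx))
    exact ⟨rfl, rfl⟩
  · cases b <;> simp only [halfSign, cond_true, cond_false] at hy <;> linarith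
  · exact absurd hx (by positivity)
  · cases b' <;> simp only [halfSign, cond_true, cond_false] at hy <;> linarith
  · obtain rfl : s = t := by linarith
    have mem_Ico (d : Bool) : d.toNat * s ∈ Set.Ico (0 : ℝ) 1 := by
      cases d <;> simp [hs₀.le, hs₁]
    obtain ⟨rfl, hshift⟩ := eq_and_eq_of_natCast_add_eq (mem_Ico shift) (mem_Ico shift')
      (show (k : ℝ) + _ = l + _ by linarith)
    have hcast := mul_right_cancel₀ hs₀.ne' hshift
    obtain rfl : shift = shift' := by cases shift <;> cases shift' <;> simp_all
    exact ⟨rfl, rfl⟩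

end FanEdge

/-- Two rows of vertices: every `(b, k + 1)` is joined to its hub `(b, 0)`, the hubs are joined to
each other, and a zigzag path runs between the rows. -/
noncomputable def doubleFan : ArcSystem (Bool × ℕ) FanEdge where
  src := FanEdge.src
  tgt := FanEdge.tgt
  point := fanPoint
  arc := FanEdge.arc
  src_ne_tgt := by rintro (_ | _ | _) <;> simp [FanEdge.src, FanEdge.tgt]
  point_injective := fanPoint_injective
  continuous_arc := by rintro (_ | _ | _) <;> unfold FanEdge.arc <;> fun_prop
  arc_zero := by rintro (_ | ⟨_ | _, _⟩ | _) <;> simp [FanEdge.arc, FanEdge.src, fanPoint, halfSign]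
  arc_one := by
    rintro (_ | ⟨_ | _, _⟩ | _) <;> norm_num [FanEdge.arc, FanEdge.tgt, fanPoint, halfSign]
  arc_ne_point e _ ht := e.arc_ne_fanPoint ht
  arc_inj e e' _ _ := e.arc_inj e'

end DoubleFan

section Strip

/-- The vertices of `strip`: two rows of rim vertices, and pages in the middle. -/
inductive StripVertex
  | rim (b : Bool) (n : ℕ)
  | page (n j : ℕ)

/-- The edges of `strip`. -/
inductive StripEdge
  | outer (b : Bool)
  | side (b : Bool) (n : ℕ)
  | spoke (b : Bool) (n j : ℕ)
  | cross (n : ℕ)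

/-- The horizontal distance of the page `j` of a cell from the rim vertices it is joined to. Any
injective function with values strictly between `0` and `1 / 2` would do. -/
noncomputable def pageOffset (j : ℕ) : ℝ := (j + 3)⁻¹

lemma pageOffset_pos (j : ℕ) : 0 < pageOffset j := by
  unfold pageOffset
  positivity

lemma pageOffset_lt_half (j : ℕ) : pageOffset j < 1 / 2 := by
  rw [pageOffset, one_div]
  exact inv_strictAnti₀ two_pos (by linarith [(Nat.cast_nonneg j : (0 : ℝ) ≤ j)])

lemma pageOffset_injective : Function.Injective pageOffset := fun _ _ h =>
  Nat.cast_injective (add_right_cancel (inv_injective h))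

lemma mul_pageOffset_mem_Ico (j : ℕ) {t : ℝ} (ht : t ∈ Set.Icc 0 1) :
    t * pageOffset j ∈ Set.Ico (0 : ℝ) 1 :=
  ⟨mul_nonneg ht.1 (pageOffset_pos j).le,
    mul_lt_one_of_nonneg_of_lt_one_right ht.2 (pageOffset_pos j).le
      ((pageOffset_lt_half j).trans one_half_lt_one)⟩

/-- The position of a vertex of `strip`: the rim lies on `y = ±1` and the pages on `y = 0`. -/
noncomputable def stripPoint : StripVertex → ℝ × ℝ
  | .rim b n => (n, halfSign b)
  | .page n j => (n + pageOffset j, 0)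

lemma stripPoint_injective : Function.Injective stripPoint := by
  rintro (⟨b, n⟩ | ⟨n, j⟩) (⟨b', n'⟩ | ⟨n', j'⟩) h <;> obtain ⟨hx, hy⟩ := Prod.mk.inj h
  · rw [Nat.cast_injective hx, halfSign_injective hy]
  · exact absurd hy (halfSign_ne_zero b)
  · exact absurd hy.symm (halfSign_ne_zero b')
  · have mem_Ico (i : ℕ) : pageOffset i ∈ Set.Ico (0 : ℝ) 1 := by
      simpa only [one_mul] using mul_pageOffset_mem_Ico i ⟨zero_le_one, le_rfl⟩
    obtain ⟨rfl, hoffset⟩ := eq_and_eq_of_natCast_add_eq (mem_Ico j) (mem_Ico j') hx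
    rw [pageOffset_injective hoffset]

namespace StripEdge

/-- The initial vertex of an edge. -/
def src : StripEdge → StripVertex
  | outer b => .rim b 0
  | side b n => .rim b n
  | spoke _ n j => .page n j
  | cross n => .rim false n

/-- The final vertex of an edge. -/
def tgt : StripEdge → StripVertex
  | outer b => .rim b 3
  | side b n => .rim b (n + 1)
  | spoke b n _ => .rim b n
  | cross n => .rim true (n + 1)

/-- The arc from `e.src` to `e.tgt`, a parabola with `|y| > 1` for the outer edges and a straight
segment for the others. -/
noncomputable def arc : StripEdge → ℝ → ℝ × ℝ
  | outer b, t => (3 * t, halfSign b * (1 + t * (1 - t)))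
  | side b n, t => (n + t, halfSign b)
  | spoke b n j, t => (n + (1 - t) * pageOffset j, halfSign b * t)
  | cross n, t => (n + t, 2 * t - 1)

lemma spoke_arc_ne_cross_arc {b : Bool} {n n' j : ℕ} {s t : ℝ} (hs : s ∈ Set.Ico 0 1)
    (ht : t ∈ Set.Ioo 0 1) : (spoke b n j).arc s ≠ (cross n').arc t := by
  intro h
  obtain ⟨hx, hy⟩ := Prod.mk.inj h
  have hs' : 1 - s ∈ Set.Icc 0 1 := ⟨by linarith [hs.2], by linarith [hs.1]⟩
  have hst := (eq_and_eq_of_natCast_add_eq (mul_pageOffset_mem_Ico j hs') ⟨ht.1.le, ht.2⟩ hx).2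
  have := mul_lt_mul_of_pos_left (pageOffset_lt_half j) (sub_pos.2 hs.2)
  cases b <;> simp only [halfSign, cond_true, cond_false] at hy <;> linarith [hs.1]

lemma arc_ne_stripPoint (e : StripEdge) {t : ℝ} (ht : t ∈ Set.Ioo 0 1) (v : StripVertex) :
    e.arc t ≠ stripPoint v := by
  have ⟨ht₀, ht₁⟩ := ht
  have bulge_pos : 0 < t * (1 - t) := mul_pos ht₀ (sub_pos.2 ht₁)
  intro h
  rcases v with ⟨b', n'⟩ | ⟨n', j'⟩
  · rcases e with b | ⟨b, n⟩ | ⟨b, n, j⟩ | n <;> obtain ⟨hx, hy⟩ := Prod.mk.inj h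
    · cases b <;> cases b' <;> simp only [halfSign, cond_true, cond_false] at hy <;> linarith
    · exact ht₀.ne' (eq_and_eq_of_natCast_add_eq ⟨ht₀.le, ht₁⟩ ⟨le_rfl, one_pos⟩
        (hx.trans (add_zero _).symm)).2
    · cases b <;> cases b' <;> simp only [halfSign, cond_true, cond_false] at hy <;> linarith
    · cases b' <;> simp only [halfSign, cond_true, cond_false] at hy <;> linarith
  · rcases e with b | ⟨b, n⟩ | ⟨b, n, j⟩ | n
    · exact mul_ne_zero (halfSign_ne_zero b) (by linarith) (Prod.mk.inj h).2
    · exact halfSign_ne_zero b (Prod.mk.inj h).2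
    · exact mul_ne_zero (halfSign_ne_zero b) ht₀.ne' (Prod.mk.inj h).2
    · refine spoke_arc_ne_cross_arc (b := true) (n := n') (n' := n) (j := j')
        ⟨le_rfl, one_pos⟩ ht ?_
      rw [h]
      simp [arc, stripPoint]

lemma arc_inj (e e' : StripEdge) {s t : ℝ} (hs : s ∈ Set.Ioo 0 1) (ht : t ∈ Set.Ioo 0 1)
    (h : e.arc s = e'.arc t) : e = e' ∧ s = t := by
  have ⟨hs₀, hs₁⟩ := hs
  have ⟨ht₀, ht₁⟩ := ht
  have bulge_pos : 0 < s * (1 - s) := mul_pos hs₀ (sub_pos.2 hs₁)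
  have bulge_pos' : 0 < t * (1 - t) := mul_pos ht₀ (sub_pos.2 ht₁)
  rcases e with b | ⟨b, n⟩ | ⟨b, n, j⟩ | n <;> rcases e' with b' | ⟨b', n'⟩ | ⟨b', n', j'⟩ | n' <;>
    obtain ⟨hx, hy⟩ := Prod.mk.inj h
  case outer.outer =>
    obtain ⟨rfl, -⟩ := halfSign_mul_cancel (by linarith) (by linarith) hy
    exact ⟨rfl, by linarith⟩
  case side.side =>
    obtain ⟨rfl, hst⟩ := eq_and_eq_of_natCast_add_eq ⟨hs₀.le, hs₁⟩ ⟨ht₀.le, ht₁⟩ hx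
    exact ⟨by rw [halfSign_injective hy], hst⟩
  case spoke.spoke =>
    obtain ⟨rfl, rfl⟩ := halfSign_mul_cancel hs₀ ht₀ hy
    have mem_Ico (i : ℕ) := mul_pageOffset_mem_Ico i (t := 1 - s) ⟨by linarith, by linarith⟩
    obtain ⟨rfl, hoffset⟩ := eq_and_eq_of_natCast_add_eq (mem_Ico j) (mem_Ico j') hx
    rw [pageOffset_injective (mul_left_cancel₀ (sub_pos.2 hs₁).ne' hoffset)]
    exact ⟨rfl, rfl⟩
  case cross.cross =>
    obtain ⟨rfl, hst⟩ := eq_and_eq_of_natCast_add_eq ⟨hs₀.le, hs₁⟩ ⟨ht₀.le, ht₁⟩ hx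
    exact ⟨rfl, hst⟩
  case spoke.cross => exact absurd h (spoke_arc_ne_cross_arc ⟨hs₀.le, hs₁⟩ ht)
  case cross.spoke => exact absurd h.symm (spoke_arc_ne_cross_arc ⟨ht₀.le, ht₁⟩ hs)
  -- The remaining pairs of arcs lie at different heights `|y|`.
  case outer.side | side.outer | outer.spoke | spoke.outer | side.spoke | spoke.side =>
    cases b <;> cases b' <;> simp only [halfSign, cond_true, cond_false] at hy <;> linarith
  case outer.cross | side.cross =>
    cases b <;> simp only [halfSign, cond_true, cond_false] at hy <;> linarith
  case cross.outer | cross.side =>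
    cases b' <;> simp only [halfSign, cond_true, cond_false] at hy <;> linarith

end StripEdge

/-- Two rows of rim vertices `(n, ±1)`, consecutive ones joined by straight sides, with `(0, ±1)`
and `(3, ±1)` also joined by an outer arc. The strip between the rows is cut into cells by the
segments from `(n, -1)` to `(n + 1, 1)`, and in each cell infinitely many pages `page n j` are
joined to both `(n, -1)` and `(n, 1)`. -/
noncomputable def strip : ArcSystem StripVertex StripEdge where
  src := StripEdge.src
  tgt := StripEdge.tgt
  point := stripPoint
  arc := StripEdge.arc
  src_ne_tgt := by rintro (_ | _ | _ | _) <;> simp [StripEdge.src, StripEdge.tgt]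
  point_injective := stripPoint_injective
  continuous_arc := by rintro (_ | _ | _ | _) <;> unfold StripEdge.arc <;> fun_prop
  arc_zero := by
    rintro (_ | _ | _ | _) <;> simp [StripEdge.arc, StripEdge.src, stripPoint, halfSign]
  arc_one := by
    rintro (_ | _ | _ | _) <;> norm_num [StripEdge.arc, StripEdge.tgt, stripPoint, halfSign]
  arc_ne_point e _ ht := e.arc_ne_stripPoint ht
  arc_inj e e' _ _ := e.arc_inj e'

end Strip

section Layers

/-- The edges of `strip` between the rim vertices with `x`-coordinates `0`, `1`, `2` and `3`,
directed to the right, and upwards when the row changes. -/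
abbrev IsRimEdge (b : Bool) (m : ℕ) (b' : Bool) (n : ℕ) : Prop :=
  n = m + 1 ∧ b ≤ b' ∨ m = 0 ∧ n = 3 ∧ b = b'

lemma strip_adj_rim {b b' : Bool} {m n : ℕ} (h : IsRimEdge b m b' n) :
    strip.graph.Adj (.rim b m) (.rim b' n) := by
  obtain ⟨rfl, hb⟩ | ⟨rfl, rfl, rfl⟩ := h
  · cases b <;> cases b'
    exacts [strip.adj (.side false m), strip.adj (.cross m), absurd hb (by decide),
      strip.adj (.side true m)]
  · exact strip.adj (.outer b)

/-- The level of the `k`-th vertex of a row within its block of four. A vertex of level `n` occupies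
the rim at `x = n` in the layer of its own block, and the cell `n - 1` (modulo `4`) in the other
layers. Levels are odd in one row and even in the other, so of two vertices in different rows one
is always a page next to the other's rim position. -/
def level : Bool → Fin 4 → Fin 4
  | true => ![1, 1, 3, 3]
  | false => ![2, 0, 2, 0]

/-- The row of `strip` that the `k`-th vertex of a block occupies in the layer of that block. -/
def rimSide : Bool → Fin 4 → Bool
  | true => ![true, false, false, true]
  | false => ![false, true, true, false]

/-- The vertex of `strip` that `v` is sent to in the layer of the `r`-th block of four. -/
def place (r : ℕ) (v : Bool × ℕ) : StripVertex :=
  if v.2 / 4 = r then .rim (rimSide v.1 (Fin.ofNat 4 v.2)) (level v.1 (Fin.ofNat 4 v.2))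
  else .page (level v.1 (Fin.ofNat 4 v.2) - 1).val v.2

lemma eq_of_level_eq (k : Fin 4) {b b' : Bool} : level b k = level b' k → b = b' := by
  revert k b b'
  decide

lemma eq_and_eq_of_rimSide_eq_of_level_eq : ∀ (b b' : Bool) (k l : Fin 4),
    rimSide b k = rimSide b' l → level b k = level b' l → b = b' ∧ k = l := by
  decide

lemma isRimEdge_or_isRimEdge : ∀ k l : Fin 4, k ≠ l → ¬(k = 2 ∧ l = 1) →
    IsRimEdge (rimSide true k) (level true k) (rimSide false l) (level false l) ∨
      IsRimEdge (rimSide false l) (level false l) (rimSide true k) (level true k) := by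
  decide

lemma level_sub_one_eq_or : ∀ k l : Fin 4,
    level true k - 1 = level false l ∨ level false l - 1 = level true k := by
  decide

lemma place_injective (r : ℕ) : Function.Injective (place r) := by
  rintro ⟨b, k⟩ ⟨b', l⟩ h
  simp only [place] at h
  split_ifs at h with hk hl hl
  · obtain ⟨hside, hlevel⟩ := StripVertex.rim.inj h
    obtain ⟨rfl, hkl⟩ :=
      eq_and_eq_of_rimSide_eq_of_level_eq _ _ _ _ hside (Fin.val_injective hlevel)
    have hmod : k % 4 = l % 4 := congrArg Fin.val hkl
    have hkl : k = l := by omega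
    rw [hkl]
  · obtain ⟨hlevel, rfl⟩ := StripVertex.page.inj h
    rw [eq_of_level_eq _ (sub_left_injective (Fin.val_injective hlevel))]

lemma strip_adj_place_of_div_eq {k l : ℕ} (hdiv : k / 4 = l / 4) (hne : k ≠ l)
    (hmod : ¬(k % 4 = 2 ∧ l % 4 = 1)) :
    strip.graph.Adj (place (k / 4) (true, k)) (place (k / 4) (false, l)) := by
  have hres : Fin.ofNat 4 k ≠ Fin.ofNat 4 l := by
    rw [Ne, Fin.ext_iff, Fin.val_ofNat, Fin.val_ofNat]
    omega
  have hres' : ¬(Fin.ofNat 4 k = 2 ∧ Fin.ofNat 4 l = 1) := by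
    rwa [Fin.ext_iff, Fin.ext_iff, Fin.val_ofNat, Fin.val_ofNat]
  rw [place, place, if_pos rfl, if_pos hdiv.symm]
  exact (isRimEdge_or_isRimEdge _ _ hres hres').elim strip_adj_rim fun h => (strip_adj_rim h).symm

lemma strip_adj_place_of_div_ne {b b' : Bool} {k l : ℕ} (hdiv : k / 4 ≠ l / 4)
    (hlevel : level b (Fin.ofNat 4 k) - 1 = level b' (Fin.ofNat 4 l)) :
    strip.graph.Adj (place (l / 4) (b, k)) (place (l / 4) (b', l)) := by
  rw [place, place, if_neg hdiv, if_pos rfl, hlevel]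
  exact strip.adj (.spoke _ _ _)

/-- The planar layers covering `K_{1,1,m,m}` for `m ≤ 4 * p + 3`: a strip for each of the `p + 1`
blocks, and the double fan. -/
noncomputable def layer (p : ℕ) : Fin (p + 2) → SimpleGraph (Bool × ℕ) :=
  Fin.snoc (α := fun _ => SimpleGraph (Bool × ℕ)) (fun r => strip.graph.comap (place r))
    doubleFan.graph

lemma isPlanar_layer (p : ℕ) (i : Fin (p + 2)) : IsPlanar (layer p i) := by
  induction i using Fin.lastCases with
  | last =>
    rw [layer, Fin.snoc_last]
    exact doubleFan.isPlanar_graph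
  | cast r =>
    rw [layer, Fin.snoc_castSucc]
    exact strip.isPlanar_graph.of_hom (Embedding.comap ⟨_, place_injective r⟩ _).toHom
      (place_injective r)

lemma exists_layer_adj_of_strip_adj {p r : ℕ} (hr : r < p + 1) {u v : Bool × ℕ}
    (h : strip.graph.Adj (place r u) (place r v)) : ∃ i, (layer p i).Adj u v :=
  ⟨Fin.castSucc ⟨r, hr⟩, by rwa [layer, Fin.snoc_castSucc]⟩

lemma exists_layer_adj_of_doubleFan_adj {p : ℕ} {u v : Bool × ℕ} (h : doubleFan.graph.Adj u v) :
    ∃ i, (layer p i).Adj u v :=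
  ⟨Fin.last _, by rwa [layer, Fin.snoc_last]⟩

lemma exists_layer_adj_of_fst_ne {p k l : ℕ} (hk : k < 4 * (p + 1)) (hl : l < 4 * (p + 1)) :
    ∃ i, (layer p i).Adj (true, k) (false, l) := by
  by_cases hdiv : k / 4 = l / 4
  · by_cases hne : k = l
    · subst hne
      rcases k with _ | k
      · exact exists_layer_adj_of_doubleFan_adj (doubleFan.adj .hubs).symm
      · exact exists_layer_adj_of_doubleFan_adj (doubleFan.adj (.rung false k)).symm
    by_cases hmod : k % 4 = 2 ∧ l % 4 = 1
    · obtain ⟨j, rfl⟩ := Nat.exists_eq_succ_of_ne_zero (show l ≠ 0 by omega)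
      obtain rfl : k = j + 2 := by omega
      exact exists_layer_adj_of_doubleFan_adj (doubleFan.adj (.rung true j)).symm
    · exact exists_layer_adj_of_strip_adj (by omega) (strip_adj_place_of_div_eq hdiv hne hmod)
  · rcases level_sub_one_eq_or (Fin.ofNat 4 k) (Fin.ofNat 4 l) with h | h
    · exact exists_layer_adj_of_strip_adj (by omega) (strip_adj_place_of_div_ne hdiv h)
    · exact exists_layer_adj_of_strip_adj (by omega)
        (strip_adj_place_of_div_ne (Ne.symm hdiv) h).symm

/-- The complete multipartite graph `K_{1,1,ℕ,ℕ}`: `(true, 0)` and `(false, 0)` are the singleton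
parts, and the other vertices of each row form the infinite parts. -/
def hubGraph : SimpleGraph (Bool × ℕ) where
  Adj u v := u ≠ v ∧ (u.1 = v.1 → u.2 = 0 ∨ v.2 = 0)
  symm := ⟨fun _ _ h => ⟨h.1.symm, fun huv => (h.2 huv.symm).symm⟩⟩
  loopless := ⟨fun _ h => h.1 rfl⟩

lemma exists_layer_adj_hub (p : ℕ) (b : Bool) {k : ℕ} (hk : k ≠ 0) :
    ∃ i, (layer p i).Adj (b, 0) (b, k) := by
  obtain ⟨k, rfl⟩ := Nat.exists_eq_succ_of_ne_zero hk
  exact exists_layer_adj_of_doubleFan_adj (doubleFan.adj (.spoke b k))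

theorem exists_layer_adj {p : ℕ} {u v : Bool × ℕ} (hu : u.2 < 4 * (p + 1))
    (hv : v.2 < 4 * (p + 1)) (h : hubGraph.Adj u v) : ∃ i, (layer p i).Adj u v := by
  obtain ⟨b, k⟩ := u
  obtain ⟨b', l⟩ := v
  by_cases hb : b = b'
  · subst hb
    obtain ⟨hne, hhub⟩ := h
    obtain rfl | rfl : k = 0 ∨ l = 0 := hhub rfl
    · exact exists_layer_adj_hub p b fun hl : l = 0 => hne (by rw [hl])
    · obtain ⟨i, hi⟩ := exists_layer_adj_hub p b fun hk : k = 0 => hne (by rw [hk])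
      exact ⟨i, hi.symm⟩
  · cases b <;> cases b'
    · exact absurd rfl hb
    · obtain ⟨i, hi⟩ := exists_layer_adj_of_fst_ne hv hu
      exact ⟨i, hi.symm⟩
    · exact exists_layer_adj_of_fst_ne hu hv
    · exact absurd rfl hb

end Layers

section CompleteMultipartite

variable {m : ℕ}

/-- The embedding of `K_{1,1,m,m}` into `K_{1,1,ℕ,ℕ}`. -/
def toRow : (Σ i : Fin 4, ![Fin 1, Fin 1, Fin m, Fin m] i) → Bool × ℕ
  | ⟨0, _⟩ => (true, 0)
  | ⟨1, _⟩ => (false, 0)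
  | ⟨2, k⟩ => (true, Fin.val (n := m) k + 1)
  | ⟨3, k⟩ => (false, Fin.val (n := m) k + 1)

lemma toRow_injective : Function.Injective (toRow (m := m)) := by
  rintro ⟨i, k⟩ ⟨j, l⟩ h
  obtain rfl : i = j := by fin_cases i <;> fin_cases j <;> simp [toRow] at h ⊢
  match i with
  | 0 | 1 => rw [Subsingleton.elim (α := Fin 1) k l]
  | 2 | 3 => rw [Fin.ext (n := m) (Nat.succ.inj (congrArg Prod.snd h))]

lemma adj_iff_hubGraph_adj_toRow (u v : Σ i : Fin 4, ![Fin 1, Fin 1, Fin m, Fin m] i) :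
    (completeMultipartiteGraph ![Fin 1, Fin 1, Fin m, Fin m]).Adj u v ↔
      hubGraph.Adj (toRow u) (toRow v) := by
  obtain ⟨i, k⟩ := u
  obtain ⟨j, l⟩ := v
  fin_cases i <;> fin_cases j <;> simp [toRow, hubGraph]

lemma toRow_snd_le (u : Σ i : Fin 4, ![Fin 1, Fin 1, Fin m, Fin m] i) : (toRow u).2 ≤ m := by
  match u with
  | ⟨0, _⟩ | ⟨1, _⟩ => exact m.zero_le
  | ⟨2, k⟩ | ⟨3, k⟩ => exact Fin.is_lt (n := m) k

/-- Each side of `K_{m+1,m+1}` consists of a singleton part and a part of size `m` of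
`K_{1,1,m,m}`. -/
def toVertex : Fin (m + 1) ⊕ Fin (m + 1) → Σ i : Fin 4, ![Fin 1, Fin 1, Fin m, Fin m] i :=
  Sum.elim (Fin.cases ⟨0, (0 : Fin 1)⟩ fun k => ⟨2, (k : Fin m)⟩)
    (Fin.cases ⟨1, (0 : Fin 1)⟩ fun k => ⟨3, (k : Fin m)⟩)

lemma toRow_toVertex_inl (i : Fin (m + 1)) : toRow (toVertex (.inl i)) = (true, i.val) := by
  cases i using Fin.cases <;> rfl

lemma toRow_toVertex_inr (i : Fin (m + 1)) : toRow (toVertex (.inr i)) = (false, i.val) := by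
  cases i using Fin.cases <;> rfl

lemma toVertex_injective : Function.Injective (toVertex (m := m)) := by
  rintro (i | i) (j | j) h <;> replace h := congrArg toRow h <;>
    simp_all [toRow_toVertex_inl, toRow_toVertex_inr, Fin.ext_iff]

/-- The inclusion of `K_{m+1,m+1}` in `K_{1,1,m,m}`. -/
def toVertexHom : completeBipartiteGraph (Fin (m + 1)) (Fin (m + 1)) →g
    completeMultipartiteGraph ![Fin 1, Fin 1, Fin m, Fin m] where
  toFun := toVertex
  map_rel' {u v} h := by
    rw [adj_iff_hubGraph_adj_toRow]
    rcases u with i | i <;> rcases v with j | j <;>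
      simp_all [toRow_toVertex_inl, toRow_toVertex_inr, hubGraph]

lemma thickness_completeMultipartiteGraph_one_one {p : ℕ} (hpm : 4 * p + 2 ≤ m)
    (hmp : m ≤ 4 * p + 3) :
    thickness (completeMultipartiteGraph ![Fin 1, Fin 1, Fin m, Fin m]) = p + 2 := by
  refine thickness_eq_of_isPlanarUnion ?_ fun n h => ?_
  · refine isPlanarUnion_of_forall_adj (isPlanar_layer p) toRow_injective fun u v h => ?_
    have hlt (w) : (toRow (m := m) w).2 < 4 * (p + 1) := by linarith [toRow_snd_le w]
    exact exists_layer_adj (hlt u) (hlt v) ((adj_iff_hubGraph_adj_toRow u v).1 h)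
  · exact add_two_le_of_isPlanarUnion_completeBipartiteGraph (by omega)
      (h.of_hom toVertexHom toVertex_injective)

end CompleteMultipartite

theorem thickness_K11_4p2_4p3 (p : ℕ) :
    thickness (completeMultipartiteGraph ![Fin 1, Fin 1, Fin (4 * p + 2), Fin (4 * p + 2)]) = p + 2 ∧
    thickness (completeMultipartiteGraph ![Fin 1, Fin 1, Fin (4 * p + 3), Fin (4 * p + 3)]) = p + 2 :=
  ⟨thickness_completeMultipartiteGraph_one_one le_rfl (by omega),
    thickness_completeMultipartiteGraph_one_one (by omega) le_rfl⟩
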